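/- arXiv:1503.08993 — 4 statements merged into one kernel-verified Lean document; each statement's English description precedes it below -/
import Mathlib

section
/- Let S be a locally compact, locally connected, metrizable topological space admitting a continuous binary operation · : S × S → S and a point e ∈ S such that: (1) the right shift ρ_e : S → S, x ↦ x·e, is injective and open; (2) for every a ∈ S the left shift λ_a : S → S, x ↦ a·x, is injective and open; (3) for every a ∈ S and every neighborhood O_e ⊆ S of e there is a neighborhood U_a ⊆ S of a such that the intersection ⋂_{x∈U_a} x·O_e is a neighborhood of the point a·e in S. Then S is isotopically orientable. -/
/-!
For `u` near `x`, hypothesis `h3` makes `u · e = x · v` solvable, and `u ↦ v` is the chart at `x`.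
A transition map sends `v` to the solution `w` of `y · w = x · v`. If `γ` is a path from `y` to `x`
along which `γ t · w = x · v` stays solvable in `E`, then `(t, v) ↦ w` is an isotopy from the
transition map to the identity. Such solutions depend continuously on all parameters because they
are unique and can be confined to a compact neighbourhood `K ⊆ E` of `e`
(`continuousOn_solution`), and each stage is an open embedding (`openEmbeddingOn_solution`).

The path exists because a locally compact, locally connected, metrizable space is locally
path-connected (`exists_path_of_isPreconnected`): two points of a connected open set with compact
closure are joined by chains of ever smaller connected open sets, each chain refining the previous
one, and the associated step functions converge uniformly to a path. Chart domains are balls of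
half the radius of a ball inside a good neighbourhood, so that whenever two of them overlap, both
centres and the overlap lie in a common good neighbourhood.
-/

/-- A function `f` restricted to `U` is an open topological embedding into `E`:
it is continuous on `U`, injective on `U`, maps `U` into `E`, and maps open
subsets of `U` to open sets. -/
def OpenEmbeddingOn {X : Type*} [TopologicalSpace X] (f : X → X) (U E : Set X) : Prop :=
  ContinuousOn f U ∧ Set.InjOn f U ∧ Set.MapsTo f U E ∧
    ∀ V ⊆ U, IsOpen V → IsOpen (f '' V)

/-- Two maps `f g : U → E` are open-isotopic if there is a homotopy `(h_t)_{t ∈ [0,1]}`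
with `h_0 = f`, `h_1 = g`, each `h_t` being an open topological embedding of `U` into `E`. -/
def OpenIsotopic {X : Type*} [TopologicalSpace X] (f g : X → X) (U E : Set X) : Prop :=
  ∃ H : ℝ × X → X,
    ContinuousOn H (Set.Icc (0:ℝ) 1 ×ˢ U) ∧
    (∀ u ∈ U, H (0, u) = f u) ∧
    (∀ u ∈ U, H (1, u) = g u) ∧
    ∀ t ∈ Set.Icc (0:ℝ) 1, OpenEmbeddingOn (fun u => H (t, u)) U E

/-- `X` is an `E`-orientable `E`-manifold: there is an atlas of open charts
`φ_x : U_x → E` such that every transition map is, locally, open-isotopic to the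
identity inclusion. -/
def EOrientableManifold {X : Type*} [TopologicalSpace X] (E : Set X) : Prop :=
  ∃ (U : X → Set X) (φ : X → X → X),
    (∀ x : X, IsOpen (U x) ∧ x ∈ U x ∧ OpenEmbeddingOn (φ x) (U x) E) ∧
    ∀ x y : X, ∃ T : X → X,
      (∀ u ∈ U x ∩ U y, T (φ x u) = φ y u) ∧
      ∀ z ∈ φ x '' (U x ∩ U y), ∃ W : Set X, IsOpen W ∧ z ∈ W ∧
        W ⊆ φ x '' (U x ∩ U y) ∧ OpenIsotopic T id W E

/-- A space is isotopically orientable if there is a point `e` such that for every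
open neighborhood `E` of `e` the space is an `E`-orientable `E`-manifold. -/
def IsotopicallyOrientable (X : Type*) [TopologicalSpace X] : Prop :=
  ∃ e : X, ∀ E : Set X, IsOpen E → e ∈ E → EOrientableManifold E

open Filter Topology Set

/-! ### Chains of connected open sets -/

/-- A finite chain in `U` from `x` to `y`: points `pt 0 = x, …, pt len = y` together with open
connected sets `cell i ⊆ U`, the `i`-th one containing `pt i` and `pt (i + 1)`. The sequences are
indexed by all of `ℕ`, but only `pt i` for `i ≤ len` and `cell i` for `i < len` are constrained. -/
structure LinkChain {X : Type*} [TopologicalSpace X] (U : Set X) (x y : X) where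
  len : ℕ
  pt : ℕ → X
  cell : ℕ → Set X
  pos : 0 < len
  pt_zero : pt 0 = x
  pt_len : pt len = y
  open_cell : ∀ i < len, IsOpen (cell i)
  conn_cell : ∀ i < len, IsPreconnected (cell i)
  cell_sub : ∀ i < len, cell i ⊆ U
  left_mem : ∀ i < len, pt i ∈ cell i
  right_mem : ∀ i < len, pt (i + 1) ∈ cell i

/-- All cells of the chain have diameter at most `ε`. -/
def LinkChain.Fine {X : Type*} [MetricSpace X] {U : Set X} {x y : X} (c : LinkChain U x y)
    (ε : ℝ) : Prop :=
  ∀ i < c.len, ∀ a ∈ c.cell i, ∀ b ∈ c.cell i, dist a b ≤ ε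

/-- `d` subdivides every link of `c` into the same number `N` of smaller links. -/
def LinkChain.Refines {X : Type*} [TopologicalSpace X] {U : Set X} {x y : X}
    (d c : LinkChain U x y) : Prop :=
  ∃ N, 0 < N ∧ d.len = c.len * N ∧ ∀ k < d.len, d.cell k ⊆ c.cell (k / N)

/-- Two points of an open connected set are joined by fine chains of every sufficiently large
length. The freedom in the length allows all links of a given chain to be subdivided into equally
many pieces. -/
theorem LinkChain.exists_fine {X : Type*} [MetricSpace X] [LocallyConnectedSpace X] {U : Set X}
    (hU : IsOpen U) (hc : IsPreconnected U) {x y : X} (hx : x ∈ U) (hy : y ∈ U) {ε : ℝ}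
    (hε : 0 < ε) :
    ∃ N₀ : ℕ, ∀ N ≥ N₀, ∃ c : LinkChain U x y, c.len = N ∧ c.Fine ε := by
  refine hc.induction₂' (fun x y => ∃ N₀ : ℕ, ∀ N ≥ N₀, ∃ c : LinkChain U x y,
    c.len = N ∧ c.Fine ε) ?_ ?_ hx hy
  · intro x hx
    obtain ⟨V, hVs, hVo, hxV, hVc⟩ :=
      locallyConnectedSpace_iff_subsets_isOpen_isConnected.1 ‹_› x (U ∩ Metric.ball x (ε / 2))
        (inter_mem (hU.mem_nhds hx) (Metric.ball_mem_nhds _ (half_pos hε)))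
    have key : ∀ a ∈ V, ∀ b ∈ V, ∃ N₀ : ℕ, ∀ N ≥ N₀, ∃ c : LinkChain U a b,
        c.len = N ∧ c.Fine ε := by
      intro a ha b hb
      refine ⟨1, fun N hN => ⟨⟨N, fun i => if i = 0 then a else b, fun _ => V, hN, by simp,
        by simp; omega, fun _ _ => hVo, fun _ _ => hVc.isPreconnected,
        fun _ _ => hVs.trans inter_subset_left, ?_, ?_⟩, rfl, ?_⟩⟩
      · intro i _
        split_ifs <;> assumption
      · intro i _
        simpa using hb
      · intro i _ p hp q hq
        have h1 := (hVs hp).2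
        have h2 := (hVs hq).2
        rw [Metric.mem_ball] at h1 h2
        have := dist_triangle_right p q x
        linarith
    filter_upwards [mem_nhdsWithin_of_mem_nhds (hVo.mem_nhds hxV)] with y hy
    exact ⟨key x hxV y hy, key y hy x hxV⟩
  · rintro x y z - - - ⟨A, hA⟩ ⟨B, hB⟩
    refine ⟨A + B, fun N hN => ?_⟩
    obtain ⟨c, hcl, hcf⟩ := hA A le_rfl
    obtain ⟨d, hdl, hdf⟩ := hB (N - A) (by omega)
    have hcp := c.pos
    have hdp := d.pos
    have hpt : ∀ i, i ≤ c.len → (if i < c.len then c.pt i else d.pt (i - c.len)) = c.pt i := by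
      intro i hi
      split_ifs with h
      · rfl
      · obtain rfl : i = c.len := by omega
        simp [c.pt_len, d.pt_zero]
    refine ⟨⟨N, fun i => if i < c.len then c.pt i else d.pt (i - c.len),
      fun i => if i < c.len then c.cell i else d.cell (i - c.len), by omega, ?_, ?_, ?_, ?_, ?_,
      ?_, ?_⟩, rfl, ?_⟩
    · simp [hcp, c.pt_zero]
    · rw [if_neg (by omega), show N - c.len = d.len by omega, d.pt_len]
    · intro i hi
      split_ifs with h
      · exact c.open_cell i h
      · exact d.open_cell _ (by omega)
    · intro i hi
      split_ifs with h
      · exact c.conn_cell i h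
      · exact d.conn_cell _ (by omega)
    · intro i hi
      split_ifs with h
      · exact c.cell_sub i h
      · exact d.cell_sub _ (by omega)
    · intro i hi
      split_ifs with h
      · exact c.left_mem i h
      · exact d.left_mem _ (by omega)
    · intro i hi
      by_cases h : i < c.len
      · rw [hpt _ (by omega), if_pos h]
        exact c.right_mem i h
      · rw [if_neg h, if_neg (by omega), show i + 1 - c.len = (i - c.len) + 1 by omega]
        exact d.right_mem _ (by omega)
    · intro i hi a ha b hb
      dsimp only at hi ha hb
      split_ifs at ha hb with h
      · exact hcf i h a ha b hb
      · exact hdf _ (by omega) a ha b hb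

theorem LinkChain.exists_refines {X : Type*} [MetricSpace X] [LocallyConnectedSpace X] {U : Set X}
    {x y : X} (c : LinkChain U x y) {ε : ℝ} (hε : 0 < ε) :
    ∃ d : LinkChain U x y, d.Fine ε ∧ d.Refines c := by
  have h : ∀ i, ∃ N₀ : ℕ, i < c.len → ∀ N ≥ N₀,
      ∃ d : LinkChain (c.cell i) (c.pt i) (c.pt (i + 1)), d.len = N ∧ d.Fine ε := by
    intro i
    by_cases hi : i < c.len
    · obtain ⟨N₀, h⟩ := LinkChain.exists_fine (c.open_cell i hi) (c.conn_cell i hi)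
        (c.left_mem i hi) (c.right_mem i hi) hε
      exact ⟨N₀, fun _ => h⟩
    · exact ⟨0, fun h => absurd h hi⟩
  choose N₀ hN₀ using h
  obtain ⟨N, hN⟩ : ∃ N, ∀ i < c.len, N₀ i ≤ N :=
    ⟨(Finset.range c.len).sup N₀, fun i hi => Finset.le_sup (Finset.mem_range.2 hi)⟩
  choose d hdl hdf using fun i (hi : i < c.len) => hN₀ i hi N (hN i hi)
  have hNpos : 0 < N := by
    have := (d 0 c.pos).pos
    rwa [hdl] at this
  classical
  -- Beyond the last link the value is the constant `y`, so that index `c.len * N` is covered.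
  let q : ℕ → ℕ → X := fun i j => if h : i < c.len then (d i h).pt j else y
  let W : ℕ → ℕ → Set X := fun i j => if h : i < c.len then (d i h).cell j else univ
  have hq : ∀ i (h : i < c.len) j, q i j = (d i h).pt j := fun i h j => dif_pos h
  have hW : ∀ i (h : i < c.len) j, W i j = (d i h).cell j := fun i h j => dif_pos h
  have hq0 : ∀ i ≤ c.len, q i 0 = c.pt i := by
    intro i hi
    by_cases h : i < c.len
    · rw [hq i h, (d i h).pt_zero]
    · obtain rfl : i = c.len := by omega
      simp [q, c.pt_len]
  have hdiv : ∀ k < c.len * N, k / N < c.len := fun k hk => Nat.div_lt_of_lt_mul (by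
    rwa [mul_comm] at hk)
  have hmod : ∀ k (h : k / N < c.len), k % N < (d (k / N) h).len := fun k h => by
    rw [hdl]
    exact Nat.mod_lt _ hNpos
  refine ⟨⟨c.len * N, fun k => q (k / N) (k % N), fun k => W (k / N) (k % N),
    Nat.mul_pos c.pos hNpos, ?_, ?_, ?_, ?_, ?_, ?_, ?_⟩, ?_, N, hNpos, rfl, ?_⟩
  · simp [hq0, c.pt_zero]
  · simp [Nat.mul_div_cancel _ hNpos, hq0, c.pt_len]
  · intro k hk
    have h := hdiv k hk
    simpa only [hW _ h] using (d _ h).open_cell _ (hmod k h)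
  · intro k hk
    have h := hdiv k hk
    simpa only [hW _ h] using (d _ h).conn_cell _ (hmod k h)
  · intro k hk
    have h := hdiv k hk
    simpa only [hW _ h] using ((d _ h).cell_sub _ (hmod k h)).trans (c.cell_sub _ h)
  · intro k hk
    have h := hdiv k hk
    simpa only [hW _ h, hq _ h] using (d _ h).left_mem _ (hmod k h)
  · intro k hk
    have h := hdiv k hk
    have hr := (d _ h).right_mem _ (hmod k h)
    have hk' := Nat.div_add_mod k N
    have hm := Nat.mod_lt k hNpos
    rw [hW _ h]
    by_cases hj : k % N + 1 < N
    · have e1 : (k + 1) / N = k / N := by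
        rw [← hk', add_assoc, Nat.mul_add_div hNpos, Nat.mul_add_div hNpos, Nat.div_eq_of_lt hj,
          Nat.div_eq_of_lt hm]
      have e2 : (k + 1) % N = k % N + 1 := by
        conv_lhs => rw [← hk', add_assoc, Nat.mul_add_mod, Nat.mod_eq_of_lt hj]
      rw [e1, e2, hq _ h]
      exact hr
    · have hj' : k % N + 1 = N := by omega
      have e0 : k + 1 = (k / N + 1) * N := by
        rw [add_mul, one_mul, mul_comm]
        omega
      -- The last point of one block is the first point of the next.
      have e1 : q ((k + 1) / N) ((k + 1) % N) = (d _ h).pt (k % N + 1) := by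
        rw [e0, Nat.mul_div_cancel _ hNpos, Nat.mul_mod_left, hq0 _ h, hj']
        simpa only [hdl] using (d _ h).pt_len.symm
      rw [e1]
      exact hr
  · intro k hk a ha b hb
    have h := hdiv k hk
    dsimp only at ha hb
    rw [hW _ h] at ha hb
    exact hdf _ h _ (hmod k h) a ha b hb
  · intro k hk
    have h := hdiv k hk
    simpa only [hW _ h] using (d _ h).cell_sub _ (hmod k h)

/-! ### Paths in locally connected compact neighbourhoods -/

/-- A connected open subset of a compact set in a locally connected metric space is
path-connected inside the compact set: the step functions of ever finer chains converge uniformly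
to a path. -/
theorem exists_path_of_isPreconnected {X : Type*} [MetricSpace X] [LocallyConnectedSpace X]
    {U K : Set X} (hU : IsOpen U) (hc : IsPreconnected U) (hK : IsCompact K) (hUK : U ⊆ K)
    {x y : X} (hx : x ∈ U) (hy : y ∈ U) :
    ∃ γ : ℝ → X, ContinuousOn γ (Icc 0 1) ∧ γ 0 = x ∧ γ 1 = y ∧ ∀ t ∈ Icc (0 : ℝ) 1, γ t ∈ K := by
  obtain ⟨N₀, h0⟩ := LinkChain.exists_fine hU hc hx hy one_pos
  obtain ⟨c₀, -, hc₀⟩ := h0 N₀ le_rfl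
  choose r hrf hrr using fun (n : ℕ) (c : LinkChain U x y) =>
    c.exists_refines (ε := 1 / 2 ^ (n + 1)) (by positivity)
  let c : ℕ → LinkChain U x y := fun n => Nat.rec c₀ r n
  have hfine : ∀ n, (c n).Fine (1 / 2 ^ n) := by
    intro n
    cases n with
    | zero => simpa using (show (c 0).Fine 1 from hc₀)
    | succ n => exact hrf n (c n)
  have href : ∀ n, (c (n + 1)).Refines (c n) := fun n => hrr n (c n)
  let f : ℕ → ℝ → X := fun n t => (c n).pt ⌊t * (c n).len⌋₊
  have hpos : ∀ n, (0 : ℝ) < (c n).len := fun n => by exact_mod_cast (c n).pos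
  have hlt : ∀ n, ∀ t ∈ Ico (0 : ℝ) 1, ⌊t * (c n).len⌋₊ < (c n).len := by
    intro n t ht
    rw [Nat.floor_lt (mul_nonneg ht.1 (hpos n).le)]
    nlinarith [hpos n, ht.2]
  have hf1 : ∀ n, f n 1 = y := by
    intro n
    simp [f, (c n).pt_len]
  have hf0 : ∀ n, f n 0 = x := by
    intro n
    simp [f, (c n).pt_zero]
  have hsplit : ∀ t ∈ Icc (0 : ℝ) 1, t ∈ Ico (0 : ℝ) 1 ∨ t = 1 := fun t ht =>
    ht.2.lt_or_eq.imp (fun h => ⟨ht.1, h⟩) id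
  have hfK : ∀ n, ∀ t ∈ Icc (0 : ℝ) 1, f n t ∈ K := by
    intro n t ht
    rcases hsplit t ht with h | rfl
    · exact hUK ((c n).cell_sub _ (hlt n t h) ((c n).left_mem _ (hlt n t h)))
    · rw [hf1]
      exact hUK hy
  have hstep : ∀ t ∈ Icc (0 : ℝ) 1, ∀ n, dist (f n t) (f (n + 1) t) ≤ 2 / 2 / 2 ^ n := by
    intro t ht n
    rcases hsplit t ht with h | rfl
    · obtain ⟨N, hN, hlen, hcell⟩ := href n
      have h1 := hcell _ (hlt (n + 1) t h) ((c (n + 1)).left_mem _ (hlt (n + 1) t h))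
      have h2 : ⌊t * (c (n + 1)).len⌋₊ / N = ⌊t * (c n).len⌋₊ := by
        rw [← Nat.floor_div_natCast, hlen, Nat.cast_mul, ← mul_assoc,
          mul_div_cancel_right₀ _ (by exact_mod_cast hN.ne')]
      rw [h2] at h1
      have h3 := hfine n _ (hlt n t h) _ ((c n).left_mem _ (hlt n t h)) _ h1
      simpa using h3
    · rw [hf1 n, hf1 (n + 1), dist_self]
      positivity
  have hlim : ∀ t ∈ Icc (0 : ℝ) 1, ∃ z ∈ K, Tendsto (fun n => f n t) atTop (𝓝 z) :=
    fun t ht => cauchySeq_tendsto_of_isComplete hK.isComplete (fun n => hfK n t ht)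
      (cauchySeq_of_le_geometric_two (hstep t ht))
  have : Nonempty X := ⟨x⟩
  choose! γ hγK hγ using hlim
  have hdist : ∀ t ∈ Icc (0 : ℝ) 1, ∀ n, dist (f n t) (γ t) ≤ 2 / 2 ^ n := fun t ht n =>
    dist_le_of_le_geometric_two_of_tendsto (hstep t ht) (hγ t ht) n
  have hjump : ∀ n, ∀ s ∈ Icc (0 : ℝ) 1, ∀ t ∈ Icc (0 : ℝ) 1, s ≤ t → t - s < 1 / (c n).len →
      dist (f n s) (f n t) ≤ 1 / 2 ^ n := by
    intro n s hs t ht hst hd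
    have h1 : ⌊s * (c n).len⌋₊ ≤ ⌊t * (c n).len⌋₊ :=
      Nat.floor_mono (mul_le_mul_of_nonneg_right hst (hpos n).le)
    have h2 : ⌊t * (c n).len⌋₊ ≤ ⌊s * (c n).len⌋₊ + 1 := by
      rw [← Nat.floor_add_one (mul_nonneg hs.1 (hpos n).le)]
      apply Nat.floor_mono
      rw [lt_div_iff₀ (hpos n)] at hd
      linarith
    have h3 : ⌊t * (c n).len⌋₊ ≤ (c n).len := by
      apply Nat.floor_le_of_le
      nlinarith [hpos n, ht.2]
    rcases h1.eq_or_lt with h | h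
    · simp [f, h]
    · have h4 : ⌊t * (c n).len⌋₊ = ⌊s * (c n).len⌋₊ + 1 := by omega
      have h5 : ⌊s * (c n).len⌋₊ < (c n).len := by omega
      have h6 := hfine n _ h5 _ ((c n).left_mem _ h5) _ ((c n).right_mem _ h5)
      simpa only [f, h4] using h6
  have hjump' : ∀ n, ∀ s ∈ Icc (0 : ℝ) 1, ∀ t ∈ Icc (0 : ℝ) 1, dist s t < 1 / (c n).len →
      dist (f n s) (f n t) ≤ 1 / 2 ^ n := by
    intro n s hs t ht hd
    rcases le_total s t with h | h
    · exact hjump n s hs t ht h (by rwa [dist_comm, Real.dist_eq, abs_of_nonneg (by linarith)] at hd)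
    · rw [dist_comm]
      exact hjump n t ht s hs h (by rwa [Real.dist_eq, abs_of_nonneg (by linarith)] at hd)
  refine ⟨γ, ?_, ?_, ?_, hγK⟩
  · rw [Metric.continuousOn_iff]
    intro t ht ε hε
    obtain ⟨n, hn⟩ := exists_pow_lt_of_lt_one (show (0 : ℝ) < ε / 5 by positivity)
      (show (1 / 2 : ℝ) < 1 by norm_num)
    refine ⟨1 / (c n).len, by have := hpos n; positivity, fun s hs hd => ?_⟩
    have h1 := hdist s hs n
    have h2 := hdist t ht n
    have h3 := hjump' n s hs t ht hd
    have h4 : dist (γ s) (γ t) ≤ dist (f n s) (γ s) + dist (f n s) (f n t) + dist (f n t) (γ t) := by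
      rw [dist_comm (f n s) (γ s)]
      exact dist_triangle4 _ _ _ _
    have h5 : (2 : ℝ) / 2 ^ n = 2 * (1 / 2) ^ n := by rw [div_pow, one_pow]; ring
    have h6 : (1 : ℝ) / 2 ^ n = (1 / 2) ^ n := by rw [div_pow, one_pow]
    rw [h5] at h1 h2
    rw [h6] at h3
    linarith
  · refine tendsto_nhds_unique (hγ 0 (by simp)) ?_
    simp only [hf0]
    exact tendsto_const_nhds
  · refine tendsto_nhds_unique (hγ 1 (by simp)) ?_
    simp only [hf1]
    exact tendsto_const_nhds

/-! ### Solving `a · w = s` inside a compact set -/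

/-- Solutions `w` of `a · w = s` depend continuously on parameters as long as they stay in a fixed
compact set: by injectivity of left shifts every cluster point is the solution itself. -/
theorem continuousOn_solution {S T : Type*} [TopologicalSpace S] [T2Space S] [TopologicalSpace T]
    {mul : S → S → S} (hcont : Continuous fun p : S × S => mul p.1 p.2)
    (hinj : ∀ a : S, Function.Injective (mul a)) {K : Set S} (hK : IsCompact K) {A : Set T}
    {a s w : T → S} (ha : ContinuousOn a A) (hs : ContinuousOn s A) (hw : ∀ t ∈ A, w t ∈ K)
    (hsol : ∀ t ∈ A, mul (a t) (w t) = s t) : ContinuousOn w A := by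
  intro t₀ ht₀
  refine hK.tendsto_nhds_of_unique_mapClusterPt
    (eventually_of_mem self_mem_nhdsWithin hw) fun z _ hz => ?_
  obtain ⟨F, hF, hFz⟩ := mapClusterPt_iff_ultrafilter.1 hz
  have h1 : Tendsto (fun t => mul (a t) (w t)) F (𝓝 (mul (a t₀) z)) :=
    (hcont.tendsto (a t₀, z)).comp (((ha t₀ ht₀).mono_left hF).prodMk_nhds hFz)
  have h2 : Tendsto (fun t => mul (a t) (w t)) F (𝓝 (s t₀)) :=
    ((hs t₀ ht₀).mono_left hF).congr'
      (eventually_of_mem (hF self_mem_nhdsWithin) fun t ht => (hsol t ht).symm)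
  exact hinj (a t₀) ((tendsto_nhds_unique h1 h2).trans (hsol t₀ ht₀).symm)

/-- If `g` is a continuous injective open map and `h` solves `a · h v = g v` inside a compact subset
of `E`, then `h` is an open embedding into `E`. -/
theorem openEmbeddingOn_solution {S : Type*} [TopologicalSpace S] [T2Space S]
    {mul : S → S → S} (hcont : Continuous fun p : S × S => mul p.1 p.2)
    (hinj : ∀ a : S, Function.Injective (mul a)) {K E : Set S} (hK : IsCompact K) (hKE : K ⊆ E)
    {g h : S → S} (hg : Continuous g) (hginj : Function.Injective g) (hgo : IsOpenMap g)
    {U : Set S} (a : S) (hmem : ∀ v ∈ U, h v ∈ K) (hsol : ∀ v ∈ U, mul a (h v) = g v) :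
    OpenEmbeddingOn h U E := by
  refine ⟨continuousOn_solution hcont hinj hK (a := fun _ => a) continuousOn_const hg.continuousOn
    hmem hsol, ?_, fun v hv => hKE (hmem v hv), ?_⟩
  · intro u hu v hv huv
    apply hginj
    rw [← hsol u hu, ← hsol v hv, huv]
  · intro V hVU hV
    have : h '' V = mul a ⁻¹' (g '' V) := by
      ext w
      constructor
      · rintro ⟨v, hv, rfl⟩
        exact ⟨v, hv, (hsol v (hVU hv)).symm⟩
      · rintro ⟨v, hv, hvw⟩
        exact ⟨v, hv, hinj a ((hsol v (hVU hv)).trans hvw)⟩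
    rw [this]
    exact (hgo V hV).preimage (hcont.comp (Continuous.prodMk_right a))

/-! ### The atlas and its isotopies -/

/-- A locally compact, locally connected, metrizable space `S` with a continuous
binary operation and a point `e` such that the right shift by `e` is injective and
open, all left shifts are injective and open, and the operation is "continuously
cancellative" at `e`, is isotopically orientable. -/
theorem isotopicallyOrientable_of_shifts
    {S : Type*} [TopologicalSpace S] [TopologicalSpace.MetrizableSpace S]
    [LocallyCompactSpace S] [LocallyConnectedSpace S]
    (mul : S → S → S) (hcont : Continuous fun p : S × S => mul p.1 p.2) (e : S)
    (h1inj : Function.Injective fun x : S => mul x e)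
    (h1open : IsOpenMap fun x : S => mul x e)
    (h2inj : ∀ a : S, Function.Injective (mul a))
    (h2open : ∀ a : S, IsOpenMap (mul a))
    (h3 : ∀ a : S, ∀ Oe ∈ nhds e, ∃ Ua ∈ nhds a, (⋂ x ∈ Ua, mul x '' Oe) ∈ nhds (mul a e)) :
    IsotopicallyOrientable S := by
  let _ : MetricSpace S := TopologicalSpace.metrizableSpaceMetric S
  have : Nonempty S := ⟨e⟩
  refine ⟨e, fun E hE heE => ?_⟩
  obtain ⟨K, hKe, hKE, hK⟩ := local_compact_nhds (hE.mem_nhds heE)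
  have hρ : Continuous fun x : S => mul x e := hcont.comp (Continuous.prodMk_left e)
  have hmulc : ∀ a, Continuous (mul a) := fun a => hcont.comp (Continuous.prodMk_right a)
  -- Each point has an open neighbourhood `O p` in which any two points are joined by a path along
  -- which the charts are all defined on `O p`.
  have hO : ∀ p : S, ∃ O : Set S, IsOpen O ∧ p ∈ O ∧ ∀ x ∈ O, ∀ y ∈ O, ∃ γ : ℝ → S,
      ContinuousOn γ (Icc 0 1) ∧ γ 0 = x ∧ γ 1 = y ∧
        ∀ t ∈ Icc (0 : ℝ) 1, ∀ u ∈ O, mul u e ∈ mul (γ t) '' K := by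
    intro p
    obtain ⟨Ua, hUa, hN⟩ := h3 p K hKe
    obtain ⟨C, hCp, hCQ, hC⟩ := local_compact_nhds
      (inter_mem hUa (hρ.continuousAt.preimage_mem_nhds hN))
    refine ⟨connectedComponentIn (interior C) p, isOpen_interior.connectedComponentIn,
      mem_connectedComponentIn (mem_interior_iff_mem_nhds.2 hCp), fun x hx y hy => ?_⟩
    have hsub : connectedComponentIn (interior C) p ⊆ C :=
      (connectedComponentIn_subset _ _).trans interior_subset
    obtain ⟨γ, h1, h2, h3, h4⟩ := exists_path_of_isPreconnected
      isOpen_interior.connectedComponentIn isPreconnected_connectedComponentIn hC hsub hx hy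
    exact ⟨γ, h1, h2, h3, fun t ht u hu =>
      mem_iInter₂.1 (hCQ (hsub hu)).2 (γ t) (hCQ (h4 t ht)).1⟩
  choose O hOo hpO hOγ using hO
  choose r hr hrO using fun x => Metric.isOpen_iff.1 (hOo x) x (hpO x)
  -- The chart at `x` solves `x · v = u · e`.
  have hsolve : ∀ a s, s ∈ mul a '' K →
      Function.invFun (mul a) s ∈ K ∧ mul a (Function.invFun (mul a) s) = s := by
    rintro a _ ⟨k, hk, rfl⟩
    rw [Function.leftInverse_invFun (h2inj a) k]
    exact ⟨hk, rfl⟩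
  -- Of two overlapping balls of half radius, the larger one, doubled, contains the other centre.
  have hcommon : ∀ x y, (Metric.ball x (r x / 2) ∩ Metric.ball y (r y / 2)).Nonempty →
      ∃ p, x ∈ O p ∧ y ∈ O p ∧ Metric.ball x (r x / 2) ∩ Metric.ball y (r y / 2) ⊆ O p := by
    rintro x y ⟨u, hux, huy⟩
    rw [Metric.mem_ball] at hux huy
    have h1 := dist_triangle_left x y u
    rcases le_total (r x) (r y) with h | h
    · refine ⟨y, hrO y (Metric.mem_ball.2 (by linarith)), hpO y, fun v hv => hrO y ?_⟩
      exact Metric.ball_subset_ball (by linarith [hr y]) hv.2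
    · refine ⟨x, hpO x, hrO x (Metric.mem_ball.2 (by rw [dist_comm]; linarith)),
        fun v hv => hrO x ?_⟩
      exact Metric.ball_subset_ball (by linarith [hr x]) hv.1
  have hchart : ∀ x, ∀ u ∈ Metric.ball x (r x / 2), mul u e ∈ mul x '' K := by
    intro x u hu
    obtain ⟨γ, -, h0, -, h⟩ := hOγ x x (hpO x) x (hpO x)
    have := h 0 (by simp) u (hrO x (Metric.ball_subset_ball (by linarith [hr x]) hu))
    rwa [h0] at this
  have hemb : ∀ x, OpenEmbeddingOn (fun u => Function.invFun (mul x) (mul u e))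
      (Metric.ball x (r x / 2)) E := fun x =>
    openEmbeddingOn_solution hcont h2inj hK hKE hρ h1inj h1open x
      (fun u hu => (hsolve x _ (hchart x u hu)).1) (fun u hu => (hsolve x _ (hchart x u hu)).2)
  refine ⟨fun x => Metric.ball x (r x / 2), fun x u => Function.invFun (mul x) (mul u e),
    fun x => ⟨Metric.isOpen_ball, Metric.mem_ball_self (half_pos (hr x)), hemb x⟩,
    fun x y => ⟨fun v => Function.invFun (mul y) (mul x v), ?_, ?_⟩⟩
  · intro u hu
    dsimp only
    rw [(hsolve x _ (hchart x u hu.1)).2]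
  · intro z hz
    refine ⟨_, (hemb x).2.2.2 _ inter_subset_left
      (Metric.isOpen_ball.inter Metric.isOpen_ball), hz, Subset.rfl, ?_⟩
    obtain ⟨p, hxp, hyp, hsub⟩ := hcommon x y (image_nonempty.1 ⟨z, hz⟩)
    obtain ⟨γ, hγ, hγ0, hγ1, hγm⟩ := hOγ p y hyp x hxp
    set W := (fun u => Function.invFun (mul x) (mul u e)) ''
      (Metric.ball x (r x / 2) ∩ Metric.ball y (r y / 2)) with hW
    have hmem : ∀ t ∈ Icc (0 : ℝ) 1, ∀ v ∈ W, mul x v ∈ mul (γ t) '' K := by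
      rintro t ht _ ⟨u, hu, rfl⟩
      dsimp only
      rw [(hsolve x _ (hchart x u hu.1)).2]
      exact hγm t ht u (hsub hu)
    refine ⟨fun q => Function.invFun (mul (γ q.1)) (mul x q.2), ?_, ?_, ?_, ?_⟩
    · refine continuousOn_solution hcont h2inj hK (a := fun q : ℝ × S => γ q.1)
        (s := fun q : ℝ × S => mul x q.2) ?_ ?_ ?_ ?_
      · exact hγ.comp continuousOn_fst fun q hq => hq.1
      · exact ((hmulc x).comp continuous_snd).continuousOn
      · exact fun q hq => (hsolve _ _ (hmem q.1 hq.1 q.2 hq.2)).1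
      · exact fun q hq => (hsolve _ _ (hmem q.1 hq.1 q.2 hq.2)).2
    · intro v _
      dsimp only
      rw [hγ0]
    · intro v _
      dsimp only
      rw [hγ1]
      exact Function.leftInverse_invFun (h2inj x) v
    · intro t ht
      exact openEmbeddingOn_solution hcont h2inj hK hKE (hmulc x) (h2inj x) (h2open x) (γ t)
        (fun v hv => (hsolve _ _ (hmem t ht v hv)).1) (fun v hv => (hsolve _ _ (hmem t ht v hv)).2)
end

section
/- Let M be a topological n-manifold without boundary admitting a continuous binary operation · : M × M → M such that: (1) for some point e ∈ M the right shift ρ_e : M → M, x ↦ x·e, is injective; and (2) for every x ∈ M the left shift λ_x : M → M, y ↦ x·y, is injective. Then M is isotopically orientable. -/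
/-- A topological `n`-manifold without boundary: every point has an open
neighborhood homeomorphic to an open subset of `ℝⁿ`. (Paracompactness and
Hausdorffness are imposed as instance hypotheses.) -/
def IsTopManifold (n : ℕ) (M : Type*) [TopologicalSpace M] : Prop :=
  ∀ x : M, ∃ (U : Set M) (V : Set (EuclideanSpace ℝ (Fin n))),
    IsOpen U ∧ x ∈ U ∧ IsOpen V ∧ Nonempty (U ≃ₜ V)

/-- The closed half-space `ℝⁿ₊ = {x ∈ ℝⁿ : xₙ ≥ 0}` (the last coordinate is
nonnegative). -/
def halfSpace (n : ℕ) : Set (EuclideanSpace ℝ (Fin n)) :=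
  {x | ∀ i : Fin n, (i : ℕ) = n - 1 → 0 ≤ x i}

/-- A topological `n`-manifold with boundary: every point has an open neighborhood
admitting an open topological embedding into the half-space `ℝⁿ₊`. -/
def IsTopManifoldWithBoundary (n : ℕ) (M : Type*) [TopologicalSpace M] : Prop :=
  ∀ x : M, ∃ (U : Set M) (f : M → EuclideanSpace ℝ (Fin n)),
    IsOpen U ∧ x ∈ U ∧ Set.MapsTo f U (halfSpace n) ∧ Set.InjOn f U ∧ ContinuousOn f U ∧
    ∀ V ⊆ U, IsOpen V →
      ∃ W : Set (EuclideanSpace ℝ (Fin n)), IsOpen W ∧ f '' V = W ∩ halfSpace n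

/-- The boundary `∂M` of a manifold with boundary: points having no open
neighborhood homeomorphic to `ℝⁿ`. -/
def manifoldBoundary (n : ℕ) (M : Type*) [TopologicalSpace M] : Set M :=
  {x | ¬ ∃ U : Set M, IsOpen U ∧ x ∈ U ∧ Nonempty (U ≃ₜ EuclideanSpace ℝ (Fin n))}

open Metric MeasureTheory Set Filter Topology

/-! ### Brouwer's fixed point theorem -/

/-- Along a line through the identity, the determinant is a polynomial of degree at most `dim E`
in the parameter. -/
theorem exists_poly_det {E : Type*} [NormedAddCommGroup E] [InnerProductSpace ℝ E]
    [FiniteDimensional ℝ E] (A : E →L[ℝ] E) :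
    ∃ p : Polynomial ℝ, p.natDegree ≤ Module.finrank ℝ E ∧
      ∀ t : ℝ, p.eval t = (ContinuousLinearMap.id ℝ E + t • A).det := by
  let b := Module.finBasis ℝ E
  let M := LinearMap.toMatrix b b (A : E →ₗ[ℝ] E)
  refine ⟨Matrix.det ((Polynomial.X : Polynomial ℝ) • M.map Polynomial.C
    + (1 : Matrix _ _ ℝ).map Polynomial.C), ?_, fun t => ?_⟩
  · simpa using Polynomial.natDegree_det_X_add_C_le M 1
  · have : (ContinuousLinearMap.id ℝ E + t • A).det =
        LinearMap.det (LinearMap.id + t • (A : E →ₗ[ℝ] E)) := rfl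
    rw [this, ← LinearMap.det_toMatrix b, ← Polynomial.coe_evalRingHom, RingHom.map_det]
    congr 1
    ext i j
    simp [M, Matrix.one_apply, add_comm]
    split_ifs <;> simp [mul_comm]

/-- There is no `C¹` retraction of a closed ball onto its boundary sphere. -/
theorem no_smooth_retraction {E : Type*} [NormedAddCommGroup E] [InnerProductSpace ℝ E]
    [FiniteDimensional ℝ E] {r : E → E} (hr : ContDiff ℝ 1 r) {R : ℝ} (hR : 0 < R)
    (hn : ∀ x ∈ closedBall (0 : E) R, ‖r x‖ = R) (hs : ∀ x ∈ sphere (0 : E) R, r x = x) :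
    False := by
  borelize E
  set B : Set E := closedBall 0 R with hB
  set k : E → E := fun x => r x - x with hk
  have hkd : ContDiff ℝ 1 k := hr.sub contDiff_id
  obtain ⟨C, hC⟩ := hkd.contDiffOn.exists_lipschitzOnWith one_ne_zero
    (convex_closedBall (0 : E) R) (isCompact_closedBall 0 R)
  -- extended by zero outside the ball, `r - id` stays Lipschitz
  set K : E → E := B.indicator k with hK
  have hk0 : ∀ x ∈ sphere (0 : E) R, k x = 0 := fun x hx => by simp [hk, hs x hx]
  have hKout : ∀ x ∉ ball (0 : E) R, K x = 0 := by
    intro x hx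
    by_cases h : x ∈ B
    · rw [hK, indicator_of_mem h]
      apply hk0
      simp only [hB, mem_closedBall, mem_ball, mem_sphere] at *
      exact le_antisymm h (not_lt.1 hx)
    · rw [hK, indicator_of_notMem h]
  have hmix : ∀ x ∈ B, ∀ y ∉ B, ‖K x - K y‖ ≤ 2 * C * ‖x - y‖ := by
    intro x hx y hy
    have hyR : R < ‖y‖ := by simpa [hB] using hy
    have hxR : ‖x‖ ≤ R := by simpa [hB] using hx
    have hy0 : 0 < ‖y‖ := hR.trans hyR
    -- the radial projection of `y` to the sphere
    set z : E := (R / ‖y‖) • y with hz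
    have hzn : ‖z‖ = R := by
      rw [hz, norm_smul, Real.norm_of_nonneg (by positivity), div_mul_cancel₀ _ hy0.ne']
    have hzB : z ∈ B := by simp [hB, hzn]
    have hyz : ‖y - z‖ = ‖y‖ - R := by
      have : y - z = (1 - R / ‖y‖) • y := by rw [hz, sub_smul, one_smul]
      rw [this, norm_smul, Real.norm_of_nonneg, sub_mul, one_mul, div_mul_cancel₀ _ hy0.ne']
      rw [sub_nonneg, div_le_one hy0]; exact hyR.le
    have h1 : ‖K x - K y‖ = ‖k x - k z‖ := by
      rw [hK, indicator_of_mem hx, indicator_of_notMem hy, hk0 z (by simp [hzn])]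
    have h2 : ‖k x - k z‖ ≤ C * ‖x - z‖ := by
      simpa [dist_eq_norm] using hC.dist_le_mul x hx z hzB
    have h3 : ‖x - z‖ ≤ ‖x - y‖ + ‖y - z‖ := norm_sub_le_norm_sub_add_norm_sub x y z
    have h4 : ‖y‖ - ‖x‖ ≤ ‖x - y‖ := by rw [norm_sub_rev]; exact norm_sub_norm_le y x
    rw [h1]
    calc _ ≤ C * ‖x - z‖ := h2
      _ ≤ C * (2 * ‖x - y‖) := by gcongr; linarith
      _ = _ := by ring
  have hKlip : ∀ x y, ‖K x - K y‖ ≤ 2 * C * ‖x - y‖ := by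
    intro x y
    by_cases hx : x ∈ B <;> by_cases hy : y ∈ B
    · rw [hK, indicator_of_mem hx, indicator_of_mem hy]
      have := hC.dist_le_mul x hx y hy
      rw [dist_eq_norm, dist_eq_norm] at this
      have h0 : 0 ≤ C * ‖x - y‖ := by positivity
      linarith
    · exact hmix x hx y hy
    · rw [norm_sub_rev, norm_sub_rev x]; exact hmix y hy x hx
    · rw [hK, indicator_of_notMem hx, indicator_of_notMem hy, sub_self, norm_zero]
      positivity
  have hAC : ∀ x ∈ ball (0 : E) R, ‖fderiv ℝ k x‖ ≤ C := fun x hx =>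
    norm_fderiv_le_of_lipschitzOn ℝ
      (mem_of_superset (isOpen_ball.mem_nhds hx) ball_subset_closedBall) hC
  -- determinants close to the identity are positive
  obtain ⟨ε, hε, hdet⟩ : ∃ ε > 0, ∀ A : E →L[ℝ] E, ‖A‖ < ε →
      0 < (ContinuousLinearMap.id ℝ E + A).det := by
    have hc : Continuous fun A : E →L[ℝ] E => (ContinuousLinearMap.id ℝ E + A).det :=
      ContinuousLinearMap.continuous_det.comp (continuous_const.add continuous_id)
    have h1 : (0 : ℝ) < (ContinuousLinearMap.id ℝ E + 0).det := by
      rw [add_zero]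
      have : (ContinuousLinearMap.id ℝ E).det = 1 := LinearMap.det_id
      rw [this]; exact one_pos
    obtain ⟨ε, hε, h⟩ := Metric.eventually_nhds_iff.1
      (continuousAt_const.eventually_lt (hc.continuousAt (x := 0)) h1)
    exact ⟨ε, hε, fun A hA => h (by simpa using hA)⟩
  set vol : ℝ := (volume : Measure E).real (ball 0 R) with hvol
  have hvolpos : 0 < vol :=
    ENNReal.toReal_pos (measure_ball_pos _ _ hR).ne' measure_ball_lt_top.ne
  set D : ℝ → E → ℝ := fun t x => (ContinuousLinearMap.id ℝ E + t • fderiv ℝ k x).det with hD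
  have hsmall : ∀ t : ℝ, 0 < t → t * (2 * C) < 1 → t * C < ε →
      ∫ x in ball (0 : E) R, D t x = vol := by
    intro t ht ht1 ht2
    set F : E → E := fun x => x + t • K x with hF
    have happ : ApproximatesLinearOn F (ContinuousLinearEquiv.refl ℝ E : E →L[ℝ] E) univ
        (Real.toNNReal t * (2 * C)) := by
      intro x _ y _
      have : F x - F y - (ContinuousLinearEquiv.refl ℝ E : E →L[ℝ] E) (x - y)
          = t • (K x - K y) := by
        simp only [hF, ContinuousLinearEquiv.coe_coe, ContinuousLinearEquiv.refl_apply, smul_sub]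
        abel
      rw [this, norm_smul, Real.norm_of_nonneg ht.le]
      have := hKlip x y
      calc _ ≤ t * (2 * C * ‖x - y‖) := by gcongr
        _ = _ := by push_cast; rw [Real.coe_toNNReal t ht.le]; ring
    have hc : Subsingleton E ∨ (Real.toNNReal t * (2 * C) : NNReal) <
        ‖((ContinuousLinearEquiv.refl ℝ E).symm : E →L[ℝ] E)‖₊⁻¹ := by
      rcases subsingleton_or_nontrivial E with h | h
      · exact Or.inl h
      · right
        have : ‖((ContinuousLinearEquiv.refl ℝ E).symm : E →L[ℝ] E)‖₊ = 1 := by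
          simp
        rw [this, inv_one, ← NNReal.coe_lt_coe]
        push_cast
        rw [Real.coe_toNNReal t ht.le]
        exact ht1
    have hbij : Function.Bijective F :=
      ⟨(injOn_univ).1 (injOn_iff_injective.2 (happ.injective hc)), happ.surjective hc⟩
    have hout : F '' (ball 0 R)ᶜ = (ball 0 R)ᶜ := by
      have : ∀ x ∈ (ball (0 : E) R)ᶜ, F x = x := fun x hx => by
        simp only [hF]; rw [hKout x hx, smul_zero, add_zero]
      rw [image_congr this, image_id']
    have himg : F '' ball 0 R = ball 0 R := by
      rw [image_compl_eq hbij] at hout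
      exact compl_injective hout
    have hder : ∀ x ∈ ball (0 : E) R, HasFDerivWithinAt F
        (ContinuousLinearMap.id ℝ E + t • fderiv ℝ k x) (ball 0 R) x := by
      intro x hx
      have h1 : HasFDerivAt (fun y => y + t • k y)
          (ContinuousLinearMap.id ℝ E + t • fderiv ℝ k x) x :=
        (hasFDerivAt_id x).add
          (((hkd.differentiable one_ne_zero).differentiableAt.hasFDerivAt).const_smul t)
      refine h1.hasFDerivWithinAt.congr (fun y hy => ?_) ?_
      · simp only [hF]; rw [hK, indicator_of_mem (ball_subset_closedBall hy)]
      · simp only [hF]; rw [hK, indicator_of_mem (ball_subset_closedBall hx)]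
    have hcv := integral_image_eq_integral_abs_det_fderiv_smul (volume : Measure E)
      measurableSet_ball hder hbij.1.injOn (fun _ => (1 : ℝ))
    rw [himg] at hcv
    simp only [smul_eq_mul, mul_one, integral_const, MeasurableSet.univ,
      measureReal_restrict_apply, univ_inter] at hcv
    rw [hvol, hcv]
    refine setIntegral_congr_fun measurableSet_ball fun x hx => ?_
    refine (abs_of_pos (hdet _ ?_)).symm
    rw [norm_smul, Real.norm_of_nonneg ht.le]
    exact (mul_le_mul_of_nonneg_left (hAC x hx) ht.le).trans_lt ht2
  -- the image of `r` lies in a sphere, so its differential is degenerate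
  have hone : ∀ x ∈ ball (0 : E) R, D 1 x = 0 := by
    intro x hx
    have hrd : HasFDerivAt r (fderiv ℝ r x) x :=
      (hr.differentiable one_ne_zero).differentiableAt.hasFDerivAt
    have h1 : ContinuousLinearMap.id ℝ E + (1 : ℝ) • fderiv ℝ k x = fderiv ℝ r x := by
      have : HasFDerivAt k (fderiv ℝ r x - ContinuousLinearMap.id ℝ E) x :=
        hrd.sub (hasFDerivAt_id x)
      rw [this.fderiv, one_smul]; abel
    have hconst : HasFDerivAt (fun y => ‖r y‖ ^ 2) (0 : E →L[ℝ] ℝ) x := by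
      refine (hasFDerivAt_const (R ^ 2) x).congr_of_eventuallyEq ?_
      filter_upwards [isOpen_ball.mem_nhds hx] with y hy
      rw [hn y (ball_subset_closedBall hy)]
    have horth : ∀ v, inner ℝ (r x) (fderiv ℝ r x v) = 0 := by
      intro v
      have := congrArg (fun L => L v) (hrd.norm_sq.unique hconst)
      simpa using this
    simp only [hD]
    rw [h1]
    by_contra hne
    obtain ⟨v, hv⟩ := (LinearMap.equivOfDetNeZero (fderiv ℝ r x : E →ₗ[ℝ] E) hne).surjective (r x)
    have h2 := horth v
    have hv' : fderiv ℝ r x v = r x := hv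
    rw [hv', real_inner_self_eq_norm_sq, hn x (ball_subset_closedBall hx)] at h2
    exact hR.ne' (pow_eq_zero_iff two_ne_zero |>.1 h2)
  -- interpolation at small nodes transports the value of the integral to `t = 1`
  obtain ⟨δ, hδ, hδ1, hδ2⟩ : ∃ δ : ℝ, 0 < δ ∧ δ * (2 * C) < 1 ∧ δ * C < ε := by
    have hC0 : (0 : ℝ) ≤ C := C.2
    refine ⟨min 1 ε / (2 * C + 1), by positivity, ?_, ?_⟩
    · rw [div_mul_eq_mul_div, div_lt_one (by positivity)]
      have := min_le_left 1 ε
      nlinarith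
    · rw [div_mul_eq_mul_div, div_lt_iff₀ (by positivity)]
      have := min_le_right 1 ε
      nlinarith
  set N := Module.finrank ℝ E with hN
  set s := Finset.range (N + 1) with hsdef
  set v : ℕ → ℝ := fun i => δ / (i + 1) with hv
  have hvinj : InjOn v s := by
    intro i _ j _ hij
    simp only [hv] at hij
    rw [div_eq_div_iff (by positivity) (by positivity)] at hij
    have := mul_left_cancel₀ hδ.ne' hij
    exact_mod_cast (add_right_cancel this).symm
  have hvpos : ∀ i, 0 < v i := fun i => by simp only [hv]; positivity
  have hvle : ∀ i, v i ≤ δ := fun i => by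
    simp only [hv]
    rw [div_le_iff₀ (by positivity)]
    have : (0 : ℝ) ≤ i := Nat.cast_nonneg i
    nlinarith
  have hint : ∀ i, ∫ x in ball (0 : E) R, D (v i) x = vol := fun i =>
    hsmall _ (hvpos i)
      ((mul_le_mul_of_nonneg_right (hvle i) (by positivity)).trans_lt hδ1)
      ((mul_le_mul_of_nonneg_right (hvle i) (by positivity)).trans_lt hδ2)
  set c : ℕ → ℝ := fun i => (Lagrange.basis s v i).eval 1 with hcdef
  have hinterp : ∀ p : Polynomial ℝ, p.natDegree ≤ N →
      p.eval 1 = ∑ i ∈ s, p.eval (v i) * c i := by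
    intro p hp
    have hdeg : p.degree < (s.card : WithBot ℕ) := by
      refine lt_of_le_of_lt Polynomial.degree_le_natDegree ?_
      rw [hsdef, Finset.card_range]
      exact_mod_cast Nat.lt_succ_of_le hp
    conv_lhs => rw [Lagrange.eq_interpolate hvinj hdeg, Lagrange.interpolate_apply]
    simp [Polynomial.eval_finsetSum, hcdef]
  have hcsum : ∑ i ∈ s, c i = 1 := by
    have := hinterp 1 (by simp)
    simpa using this.symm
  have hDcont : ∀ t, Continuous (D t) := fun t =>
    ContinuousLinearMap.continuous_det.comp
      (continuous_const.add ((hkd.continuous_fderiv one_ne_zero).const_smul t))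
  have hDint : ∀ t, IntegrableOn (D t) (ball (0 : E) R) := fun t =>
    ((hDcont t).continuousOn.integrableOn_compact (isCompact_closedBall 0 R)).mono_set
      ball_subset_closedBall
  have hDsum : ∀ x, D 1 x = ∑ i ∈ s, D (v i) x * c i := by
    intro x
    obtain ⟨p, hp, he⟩ := exists_poly_det (fderiv ℝ k x)
    simpa only [he] using hinterp p hp
  have h0 : ∫ x in ball (0 : E) R, D 1 x = 0 := by
    rw [setIntegral_congr_fun measurableSet_ball hone]; simp
  have h1 : ∫ x in ball (0 : E) R, D 1 x = vol := by
    simp_rw [hDsum]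
    rw [integral_finsetSum _ fun i _ => (hDint (v i)).mul_const (c i)]
    simp_rw [integral_mul_const, hint]
    rw [← Finset.mul_sum, hcsum, mul_one]
  linarith

/-- **Brouwer's fixed point theorem** for the closed unit ball. -/
theorem brouwer_fixed_point {E : Type*} [NormedAddCommGroup E] [InnerProductSpace ℝ E]
    [FiniteDimensional ℝ E] {h : E → E} (hc : ContinuousOn h (closedBall 0 1))
    (hm : MapsTo h (closedBall 0 1) (closedBall 0 1)) :
    ∃ x ∈ closedBall (0 : E) 1, h x = x := by
  by_contra! hno
  -- extend `h` to a continuous fixed-point-free map supported in the ball of radius two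
  set p : E → E := fun x => (max 1 ‖x‖)⁻¹ • x with hp
  have hpos : ∀ x : E, 0 < max 1 ‖x‖ := fun x => lt_max_of_lt_left one_pos
  have hpB : ∀ x, p x ∈ closedBall (0 : E) 1 := by
    intro x
    rw [mem_closedBall_zero_iff, hp, norm_smul, norm_inv, Real.norm_of_nonneg (hpos x).le,
      inv_mul_le_iff₀ (hpos x), mul_one]
    exact le_max_right _ _
  have hpid : ∀ x ∈ closedBall (0 : E) 1, p x = x := by
    intro x hx
    rw [mem_closedBall_zero_iff] at hx
    simp [hp, max_eq_left hx]
  have hpc : Continuous p :=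
    ((continuous_const.max continuous_norm).inv₀ fun x => (hpos x).ne').smul continuous_id
  set χ : E → ℝ := fun x => min 1 (max 0 (2 - ‖x‖)) with hχ
  have hχc : Continuous χ := by fun_prop
  set H : E → E := fun x => χ x • h (p x) with hH
  have hHc : Continuous H := hχc.smul (hc.comp_continuous hpc hpB)
  have hH1 : ∀ x, ‖H x‖ ≤ 1 := by
    intro x
    have h1 : ‖h (p x)‖ ≤ 1 := by simpa using hm (hpB x)
    have h2 : ‖χ x‖ ≤ 1 := by
      rw [Real.norm_of_nonneg (le_min zero_le_one (le_max_left _ _))]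
      exact min_le_left _ _
    rw [hH, norm_smul]
    exact mul_le_one₀ h2 (norm_nonneg _) h1
  have hH2 : ∀ x, 2 ≤ ‖x‖ → H x = 0 := by
    intro x hx
    have : χ x = 0 := by simp [hχ, max_eq_left (by linarith : 2 - ‖x‖ ≤ 0)]
    rw [hH]; simp [this]
  have hHne : ∀ x, x - H x ≠ 0 := by
    intro x hx
    have hx' : x = H x := sub_eq_zero.1 hx
    have hx1 : ‖x‖ ≤ 1 := hx' ▸ hH1 x
    have hxB : x ∈ closedBall (0 : E) 1 := by simpa using hx1
    have hχ1 : χ x = 1 := by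
      simp only [hχ]
      exact min_eq_left (le_max_of_le_right (by linarith))
    have : H x = h x := by simp only [hH]; rw [hχ1, one_smul, hpid x hxB]
    exact hno x hxB (this.symm.trans hx'.symm)
  obtain ⟨δ, hδ, hδH⟩ : ∃ δ > 0, ∀ x ∈ closedBall (0 : E) 3, δ ≤ ‖x - H x‖ := by
    obtain ⟨x₀, -, hx₀⟩ := (isCompact_closedBall (0 : E) 3).exists_isMinOn
      (nonempty_closedBall.2 (by norm_num)) (continuous_id.sub hHc).norm.continuousOn
    exact ⟨_, norm_pos_iff.2 (hHne x₀), fun x hx => hx₀ hx⟩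
  obtain ⟨g, hg, hgH, hgs⟩ := hHc.exists_contDiff_approx 1 (ε := fun _ => δ)
    continuous_const fun _ => hδ
  have hg0 : ∀ x, 2 ≤ ‖x‖ → g x = 0 := by
    intro x hx
    by_contra hne
    exact hgs hne (hH2 x hx)
  have hgne : ∀ x, x - g x ≠ 0 := by
    intro x hx
    rcases le_total 2 ‖x‖ with h2 | h2
    · rw [hg0 x h2, sub_zero] at hx
      rw [hx, norm_zero] at h2
      linarith
    · have h3 := hδH x (by rw [mem_closedBall_zero_iff]; linarith)
      have h4 := hgH x
      rw [← sub_eq_zero.1 hx, dist_eq_norm] at h4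
      linarith
  set r : E → E := fun x => (3 / ‖x - g x‖) • (x - g x) with hr
  have hd : ContDiff ℝ 1 fun x => x - g x := contDiff_id.sub hg
  refine no_smooth_retraction (r := r) (R := 3)
    ((contDiff_const.div (hd.norm ℝ hgne) fun x => norm_ne_zero_iff.2 (hgne x)).smul hd)
    (by norm_num) (fun x _ => ?_) fun x hx => ?_
  · simp only [hr]
    rw [norm_smul, norm_div, norm_norm, div_mul_cancel₀ _ (norm_ne_zero_iff.2 (hgne x))]
    simp
  · have hx3 : ‖x‖ = 3 := by simpa using hx
    simp only [hr]
    rw [hg0 x (by rw [hx3]; norm_num), sub_zero, hx3]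
    norm_num

/-! ### Invariance of domain -/

/-- A continuous injection of the closed unit ball covers a neighborhood of the image of the
centre. If it did not, a left inverse `G` of `f` could be perturbed by less than `1` to a map with
no zero on the image of `f`, and Brouwer's theorem forbids this. -/
theorem image_closedBall_mem_nhds_aux {E : Type*} [NormedAddCommGroup E]
    [InnerProductSpace ℝ E] [FiniteDimensional ℝ E] {f : E → E}
    (hf : ContinuousOn f (closedBall 0 1)) (hi : InjOn f (closedBall 0 1)) :
    f '' closedBall 0 1 ∈ 𝓝 (f 0) := by
  borelize E
  by_contra hnot
  set B : Set E := closedBall 0 1 with hB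
  set K := f '' B with hK
  have hBc : IsCompact B := isCompact_closedBall 0 1
  have h0B : (0 : E) ∈ B := by simp [hB]
  have hKc : IsCompact K := hBc.image_of_continuousOn hf
  obtain ⟨G, hG⟩ : ∃ G : C(E, E), ∀ x ∈ B, G (f x) = x := by
    have : CompactSpace B := isCompact_iff_compactSpace.1 hBc
    have hemb : IsClosedEmbedding (fun x : B => f x) :=
      (continuousOn_iff_continuous_domRestrict.1 hf).isClosedEmbedding
        fun x y hxy => Subtype.ext (hi x.2 y.2 hxy)
    have := TietzeExtension.of_tvs ℝ (E := E)
    obtain ⟨G, hG⟩ := ContinuousMap.exists_extension hemb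
      (⟨Subtype.val, continuous_subtype_val⟩ : C(B, E))
    exact ⟨G, fun x hx => congrArg (fun φ => φ ⟨x, hx⟩) hG⟩
  have hstab : ∀ G' : E → E, ContinuousOn G' K → (∀ y ∈ K, ‖G y - G' y‖ ≤ 1) →
      ∃ y ∈ K, G' y = 0 := by
    intro G' hc hle
    obtain ⟨x, hx, he⟩ := brouwer_fixed_point (h := fun x => x - G' (f x))
      (continuousOn_id.sub (hc.comp hf (mapsTo_image f B))) fun x hx => by
        have := hle (f x) (mem_image_of_mem f hx)
        rw [hG x hx] at this
        simpa using this
    exact ⟨f x, mem_image_of_mem f hx, by simpa using he⟩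
  obtain ⟨ε, hε, hGε⟩ : ∃ ε > 0, ∀ y, ‖y - f 0‖ ≤ 2 * ε → ‖G y‖ ≤ 1 / 10 := by
    have h1 : Tendsto G (𝓝 (f 0)) (𝓝 0) := by
      simpa [hG 0 h0B] using G.continuous.tendsto (f 0)
    obtain ⟨η, hη, h⟩ := Metric.eventually_nhds_iff.1
      (h1.eventually (closedBall_mem_nhds (0 : E) (by norm_num : (0 : ℝ) < 1 / 10)))
    refine ⟨η / 4, by positivity, fun y hy => ?_⟩
    have := h (y := y) (by rw [dist_eq_norm]; linarith)
    simpa using this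
  obtain ⟨c, hcε, hcK⟩ : ∃ c, ‖c - f 0‖ < ε ∧ c ∉ K := by
    by_contra! h
    refine hnot (mem_of_superset (ball_mem_nhds _ hε) fun c hc => h c ?_)
    rwa [← dist_eq_norm]
  -- `G` is bounded below on the part of `K` away from `c`
  obtain ⟨δ, hδ, hδ1, hGδ⟩ : ∃ δ > 0, δ ≤ 1 / 10 ∧ ∀ y ∈ K, ε ≤ ‖y - c‖ → δ ≤ ‖G y‖ := by
    set S := K ∩ {y | ε ≤ ‖y - c‖} with hS
    have hSc : IsCompact S := hKc.inter_right
      (isClosed_le continuous_const (continuous_id.sub continuous_const).norm)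
    rcases S.eq_empty_or_nonempty with he | hne
    · refine ⟨1 / 10, by norm_num, le_rfl, fun y hy hy' => ?_⟩
      have : y ∈ S := ⟨hy, hy'⟩
      rw [he] at this
      exact this.elim
    · obtain ⟨y₀, hy₀, hmin⟩ := hSc.exists_isMinOn hne G.continuous.norm.continuousOn
      have hpos : 0 < ‖G y₀‖ := by
        rw [norm_pos_iff]
        intro h0
        obtain ⟨⟨x, hx, rfl⟩, hy'⟩ := hy₀
        rw [hG x hx] at h0
        rw [h0, mem_ofPred_eq, norm_sub_rev] at hy'
        linarith
      refine ⟨min (1 / 10) ‖G y₀‖, by positivity, min_le_left _ _, fun y hy hy' => ?_⟩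
      exact (min_le_right _ _).trans (hmin ⟨hy, hy'⟩)
  obtain ⟨P, hP, hPG, -⟩ := G.continuous.exists_contDiff_approx 1 (ε := fun _ => δ / 2)
    continuous_const fun _ => by positivity
  -- a generic small translation of `P` has no zero on the (null) sphere around `c`
  obtain ⟨b, hb, hbP⟩ : ∃ b, ‖b‖ < δ / 2 ∧ b ∉ P '' sphere c ε := by
    have hnull : volume (P '' sphere c ε) = 0 :=
      addHaar_image_eq_zero_of_differentiableOn_of_addHaar_eq_zero volume
        (hP.differentiable one_ne_zero).differentiableOn
        (Measure.addHaar_sphere_of_ne_zero volume c hε.ne')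
    by_contra! h
    have hsub : ball (0 : E) (δ / 2) ⊆ P '' sphere c ε := fun b hb => h b (by simpa using hb)
    exact (measure_ball_pos volume (0 : E) (by positivity : 0 < δ / 2)).ne'
      (measure_mono_null hsub hnull)
  set Q : E → E := fun y => P y - b with hQ
  have hQc : Continuous Q := hP.continuous.sub continuous_const
  have hQG : ∀ y, ‖Q y - G y‖ < δ := by
    intro y
    have h1 := hPG y
    rw [dist_eq_norm] at h1
    have h2 : Q y - G y = (P y - G y) - b := by simp only [hQ]; abel
    rw [h2]
    have := norm_sub_le (P y - G y) b
    linarith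
  -- radial projection onto the complement of the ball around `c`
  set Φ : E → E := fun y => c + max (ε / ‖y - c‖) 1 • (y - c) with hΦ
  have hKne : ∀ y ∈ K, ‖y - c‖ ≠ 0 := by
    intro y hy h0
    rw [norm_eq_zero, sub_eq_zero] at h0
    exact hcK (h0 ▸ hy)
  have hΦc : ContinuousOn Φ K := by
    have h1 : Continuous fun y : E => y - c := continuous_id.sub continuous_const
    exact continuousOn_const.add
      (((continuousOn_const.div h1.norm.continuousOn hKne).sup continuousOn_const).smul
        h1.continuousOn)
  have hfar : ∀ y ∈ K, ε ≤ ‖y - c‖ → Φ y = y := by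
    intro y hy hle
    have hpos : 0 < ‖y - c‖ := hε.trans_le hle
    simp only [hΦ]
    rw [max_eq_right ((div_le_one hpos).2 hle), one_smul, add_sub_cancel]
  have hnear : ∀ y ∈ K, ‖y - c‖ ≤ ε → ‖Φ y - c‖ = ε := by
    intro y hy hle
    have hpos : 0 < ‖y - c‖ := (norm_nonneg _).lt_of_ne' (hKne y hy)
    simp only [hΦ]
    rw [max_eq_left ((one_le_div hpos).2 hle), add_sub_cancel_left, norm_smul,
      Real.norm_of_nonneg (by positivity), div_mul_cancel₀ _ hpos.ne']
  obtain ⟨y, hy, hy0⟩ := hstab (fun y => Q (Φ y)) (hQc.comp_continuousOn hΦc) fun y hy => by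
    rcases le_total ε ‖y - c‖ with h | h
    · rw [hfar y hy h, norm_sub_rev]
      have := hQG y
      linarith
    · have h1 := hnear y hy h
      have h2 : ‖G (Φ y)‖ ≤ 1 / 10 := hGε _ (by
        have := norm_sub_le_norm_sub_add_norm_sub (Φ y) c (f 0)
        linarith)
      have h3 : ‖G y‖ ≤ 1 / 10 := hGε _ (by
        have := norm_sub_le_norm_sub_add_norm_sub y c (f 0)
        linarith)
      have h4 := hQG (Φ y)
      have h5 : G y - Q (Φ y) = G y - G (Φ y) - (Q (Φ y) - G (Φ y)) := by abel
      rw [h5]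
      have h6 := norm_sub_le (G y - G (Φ y)) (Q (Φ y) - G (Φ y))
      have h7 := norm_sub_le (G y) (G (Φ y))
      linarith
  rcases le_total ε ‖y - c‖ with h | h
  · rw [hfar y hy h] at hy0
    have h1 := hQG y
    rw [hy0, zero_sub, norm_neg] at h1
    exact absurd (hGδ y hy h) (not_le.2 h1)
  · refine hbP ⟨Φ y, ?_, sub_eq_zero.1 hy0⟩
    rw [mem_sphere, dist_eq_norm]
    exact hnear y hy h

theorem image_closedBall_mem_nhds {E : Type*} [NormedAddCommGroup E]
    [InnerProductSpace ℝ E] [FiniteDimensional ℝ E] {f : E → E} {a : E} {ρ : ℝ} (hρ : 0 < ρ)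
    (hf : ContinuousOn f (closedBall a ρ)) (hi : InjOn f (closedBall a ρ)) :
    f '' closedBall a ρ ∈ 𝓝 (f a) := by
  set s : E → E := fun x => a + ρ • x with hs
  have hsm : MapsTo s (closedBall 0 1) (closedBall a ρ) := by
    intro x hx
    rw [mem_closedBall_zero_iff] at hx
    rw [mem_closedBall, dist_eq_norm, hs, add_sub_cancel_left, norm_smul,
      Real.norm_of_nonneg hρ.le]
    nlinarith
  have hsi : Function.Injective s := fun x y hxy =>
    smul_right_injective E hρ.ne' (add_left_cancel hxy)
  have := image_closedBall_mem_nhds_aux (f := f ∘ s)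
    (hf.comp (by fun_prop) hsm) (hi.comp hsi.injOn hsm)
  have h0 : (f ∘ s) 0 = f a := by simp [hs]
  rw [h0] at this
  refine mem_of_superset this ?_
  rw [image_comp]
  exact image_mono hsm.image_subset

/-- **Invariance of domain** for open subsets of a Euclidean space. -/
theorem invariance_of_domain {E : Type*} [NormedAddCommGroup E]
    [InnerProductSpace ℝ E] [FiniteDimensional ℝ E] {f : E → E} {U : Set E} (hU : IsOpen U)
    (hf : ContinuousOn f U) (hi : InjOn f U) : IsOpen (f '' U) := by
  rw [isOpen_iff_mem_nhds]
  rintro _ ⟨x, hx, rfl⟩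
  obtain ⟨ρ, hρ, hsub⟩ := nhds_basis_closedBall.mem_iff.1 (hU.mem_nhds hx)
  exact mem_of_superset (image_closedBall_mem_nhds hρ (hf.mono hsub) (hi.mono hsub))
    (image_mono hsub)

/-- `X` is locally homeomorphic to `E`: every point lies in the domain of an open chart with
values in `E`. -/
def LocallyModelled (E X : Type*) [TopologicalSpace E] [TopologicalSpace X] : Prop :=
  ∀ x : X, ∃ c : OpenPartialHomeomorph X E, x ∈ c.source

/-- Invariance of domain for spaces locally homeomorphic to the same Euclidean space. -/
theorem LocallyModelled.isOpen_image {E X Y : Type*} [NormedAddCommGroup E]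
    [InnerProductSpace ℝ E] [FiniteDimensional ℝ E] [TopologicalSpace X] [TopologicalSpace Y]
    (hX : LocallyModelled E X) (hY : LocallyModelled E Y) {f : X → Y} {U : Set X}
    (hU : IsOpen U) (hf : ContinuousOn f U) (hi : InjOn f U) : IsOpen (f '' U) := by
  rw [isOpen_iff_mem_nhds]
  rintro _ ⟨x, hx, rfl⟩
  obtain ⟨c, hc⟩ := hX x
  obtain ⟨d, hd⟩ := hY (f x)
  set W : Set X := c.source ∩ (U ∩ f ⁻¹' d.source) with hW
  have hWo : IsOpen W := c.open_source.inter (hf.isOpen_inter_preimage hU d.open_source)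
  have hWc : W ⊆ c.source := inter_subset_left
  have hcW : IsOpen (c '' W) := c.isOpen_image_of_subset_source hWo hWc
  have hg : ∀ w ∈ W, (d ∘ f ∘ c.symm) (c w) = d (f w) := fun w hw => by
    simp [c.left_inv (hWc hw)]
  have hmaps : MapsTo c.symm (c '' W) W := by
    rintro _ ⟨w, hw, rfl⟩
    rwa [c.left_inv (hWc hw)]
  have hcont : ContinuousOn (d ∘ f ∘ c.symm) (c '' W) := by
    refine d.continuousOn.comp ((hf.mono fun w hw => hw.2.1).comp
      (c.continuousOn_symm.mono ?_) hmaps) fun z hz => (hmaps hz).2.2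
    rintro _ ⟨w, hw, rfl⟩
    exact c.map_source (hWc hw)
  have hinj : InjOn (d ∘ f ∘ c.symm) (c '' W) := by
    rintro _ ⟨w, hw, rfl⟩ _ ⟨w', hw', rfl⟩ h
    rw [hg w hw, hg w' hw'] at h
    rw [hi hw.2.1 hw'.2.1 (d.injOn hw.2.2 hw'.2.2 h)]
  have ho := invariance_of_domain hcW hcont hinj
  have himg : f '' W = d.symm '' ((d ∘ f ∘ c.symm) '' (c '' W)) := by
    rw [image_image, image_image]
    refine image_congr fun w hw => ?_
    rw [hg w hw, d.left_inv hw.2.2]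
  have hopen : IsOpen (f '' W) := by
    rw [himg]
    refine d.symm.isOpen_image_of_subset_source ho ?_
    rintro _ ⟨_, ⟨w, hw, rfl⟩, rfl⟩
    rw [hg w hw]
    exact d.map_source hw.2.2
  exact mem_of_superset (hopen.mem_nhds ⟨x, ⟨hc, hx, hd⟩, rfl⟩)
    (image_mono fun w hw => hw.2.1)

theorem LocallyModelled.isOpenEmbedding {E X Y : Type*} [NormedAddCommGroup E]
    [InnerProductSpace ℝ E] [FiniteDimensional ℝ E] [TopologicalSpace X] [TopologicalSpace Y]
    (hX : LocallyModelled E X) (hY : LocallyModelled E Y) {f : X → Y}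
    (hf : Continuous f) (hi : Function.Injective f) : IsOpenEmbedding f :=
  .of_continuous_injective_isOpenMap hf hi fun _ hU =>
    hX.isOpen_image hY hU hf.continuousOn hi.injOn

/-- The product is modelled on the `ℓ²` product, which is again Euclidean. -/
theorem LocallyModelled.prod {E X : Type*} [NormedAddCommGroup E] [InnerProductSpace ℝ E]
    [TopologicalSpace X] (hX : LocallyModelled E X) :
    LocallyModelled (WithLp 2 (E × E)) (X × X) := by
  rintro ⟨x, y⟩
  obtain ⟨c, hc⟩ := hX x
  obtain ⟨d, hd⟩ := hX y
  refine ⟨(c.prod d).transHomeomorph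
    (WithLp.prodContinuousLinearEquiv 2 ℝ E E).symm.toHomeomorph, ?_⟩
  simp [hc, hd]

theorem IsTopManifold.locallyModelled {n : ℕ} {M : Type*} [TopologicalSpace M]
    (hM : IsTopManifold n M) : LocallyModelled (EuclideanSpace ℝ (Fin n)) M := by
  intro x
  obtain ⟨U, V, hU, hx, hV, ⟨h⟩⟩ := hM x
  have : Nonempty V := ⟨h ⟨x, hx⟩⟩
  have hj : IsOpenEmbedding (fun v : V => (h.symm v : M)) :=
    hU.isOpenEmbedding_subtypeVal.comp h.symm.isOpenEmbedding
  refine ⟨(hj.toOpenPartialHomeomorph _).symm.trans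
    (hV.isOpenEmbedding_subtypeVal.toOpenPartialHomeomorph _), ?_⟩
  simp only [OpenPartialHomeomorph.trans_source, OpenPartialHomeomorph.symm_source,
    IsOpenEmbedding.toOpenPartialHomeomorph_target,
    IsOpenEmbedding.toOpenPartialHomeomorph_source, preimage_univ, inter_univ]
  exact ⟨h ⟨x, hx⟩, by simp⟩

theorem LocallyModelled.locallyPathConnectedSpace {E X : Type*} [NormedAddCommGroup E]
    [NormedSpace ℝ E] [TopologicalSpace X] (hX : LocallyModelled E X) :
    LocallyPathConnectedSpace X := by
  choose c hc using hX
  let _ : ChartedSpace E X :=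
    { atlas := range c
      chartAt := c
      mem_chart_source := hc
      chart_mem_atlas := fun x => mem_range_self x }
  exact ChartedSpace.locallyPathConnectedSpace E X

/-! ### The atlas of shifted charts -/

/-- A topological `n`-manifold without boundary with a continuous binary operation
whose right shift by some point `e` is injective and all of whose left shifts are
injective is isotopically orientable. -/
theorem isotopicallyOrientable_of_injective_shifts
    {n : ℕ} {M : Type*} [TopologicalSpace M] [T2Space M] [ParacompactSpace M]
    (hM : IsTopManifold n M)
    (mul : M → M → M) (hcont : Continuous fun p : M × M => mul p.1 p.2)
    (e : M) (h1 : Function.Injective fun x : M => mul x e)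
    (h2 : ∀ x : M, Function.Injective (mul x)) :
    IsotopicallyOrientable M := by
  have hL := hM.locallyModelled
  have := hL.locallyPathConnectedSpace
  have hne : Nonempty M := ⟨e⟩
  refine ⟨e, fun E hE heE => ?_⟩
  have hOE : ∀ (f : M → M) (A : Set M), IsOpen A → ContinuousOn f A → InjOn f A →
      MapsTo f A E → OpenEmbeddingOn f A E := fun f A _ hc hi hm =>
    ⟨hc, hi, hm, fun V hV hVo => hL.isOpen_image hL hVo (hc.mono hV) (hi.mono hV)⟩
  -- `σ` is the continuous inverse of the right shift by `e`
  obtain ⟨σ, hσc, hσ⟩ : ∃ σ : M → M, ContinuousOn σ (range fun x => mul x e) ∧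
      ∀ x, σ (mul x e) = x := by
    have ho := hL.isOpenEmbedding hL (f := fun x => mul x e)
      (hcont.comp (continuous_id.prodMk continuous_const)) h1
    let c := ho.toOpenPartialHomeomorph _
    refine ⟨c.symm, ?_, fun x => c.left_inv (x := x) (by simp [c])⟩
    simpa [c] using c.continuousOn_symm
  -- `ψ (v, u)` solves `v · ψ (v, u) = u · e` within `E`, for `(v, u)` in the open set `Ω`
  obtain ⟨Ω, ψ, hΩ, hdiag, hψc, hψE, hψ⟩ : ∃ (Ω : Set (M × M)) (ψ : M × M → M), IsOpen Ω ∧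
      (∀ x, (x, x) ∈ Ω) ∧ ContinuousOn ψ Ω ∧ (∀ p ∈ Ω, ψ p ∈ E) ∧
      ∀ p ∈ Ω, mul p.1 (ψ p) = mul p.2 e := by
    -- all left shifts are inverted at once, continuously in the shifting element
    set Ψ : M × M → M × M := fun p => (p.1, mul p.1 p.2) with hΨ
    have ho : IsOpenEmbedding Ψ := by
      refine hL.prod.isOpenEmbedding hL.prod (continuous_fst.prodMk hcont) ?_
      rintro ⟨v, y⟩ ⟨w, z⟩ h
      obtain ⟨rfl, h'⟩ := Prod.mk.inj h
      exact Prod.ext rfl (h2 v h')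
    let c := ho.toOpenPartialHomeomorph _
    have hcΨ : ∀ p, c.symm (Ψ p) = p := fun p => c.left_inv (x := p) (by simp [c])
    have hθ : Continuous fun p : M × M => (p.1, mul p.2 e) :=
      continuous_fst.prodMk (hcont.comp (continuous_snd.prodMk continuous_const))
    refine ⟨(fun p : M × M => (p.1, mul p.2 e)) ⁻¹' (Ψ '' (univ ×ˢ E)),
      fun p => (c.symm (p.1, mul p.2 e)).2, (ho.isOpenMap _ (isOpen_univ.prod hE)).preimage hθ,
      fun x => ⟨(x, e), ⟨mem_univ _, heE⟩, rfl⟩, ?_, ?_, ?_⟩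
    · refine continuous_snd.comp_continuousOn (c.continuousOn_symm.comp hθ.continuousOn ?_)
      rintro p ⟨q, -, hq⟩
      simp only [c, IsOpenEmbedding.toOpenPartialHomeomorph_target]
      exact ⟨q, hq⟩
    · rintro p ⟨q, hqE, hq⟩
      beta_reduce at hq ⊢
      rw [← hq, hcΨ]
      exact hqE.2
    · rintro p ⟨q, -, hq⟩
      beta_reduce at hq ⊢
      rw [← hq, hcΨ]
      obtain ⟨hq1, hq2⟩ := Prod.mk.inj hq
      rw [← hq1, hq2]
  have hU : ∀ x : M, ∃ U : Set M, IsOpen U ∧ x ∈ U ∧ IsPathConnected U ∧ U ×ˢ U ⊆ Ω := by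
    intro x
    obtain ⟨V, hV, hxV, hVΩ⟩ : ∃ V : Set M, IsOpen V ∧ x ∈ V ∧ V ×ˢ V ⊆ Ω := by
      have := hΩ.mem_nhds (hdiag x)
      rw [nhds_prod_eq, mem_prod_same_iff] at this
      obtain ⟨t, ht, hsub⟩ := this
      obtain ⟨V, hVt, hV, hxV⟩ := mem_nhds_iff.1 ht
      exact ⟨V, hV, hxV, (Set.prod_mono hVt hVt).trans hsub⟩
    exact ⟨pathComponentIn V x, hV.pathComponentIn x, mem_pathComponentIn_self hxV,
      isPathConnected_pathComponentIn hxV,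
      (Set.prod_mono pathComponentIn_subset pathComponentIn_subset).trans hVΩ⟩
  choose U hUo hxU hUp hUΩ using hU
  have hinj : ∀ v u u', (v, u) ∈ Ω → (v, u') ∈ Ω → ψ (v, u) = ψ (v, u') → u = u' := by
    intro v u u' hu hu' h
    refine h1 ?_
    have ha := hψ _ hu
    have hb := hψ _ hu'
    rw [h] at ha
    exact ha.symm.trans hb
  have hφ : ∀ x, OpenEmbeddingOn (fun u => ψ (x, u)) (U x) E := fun x => by
    have hm : ∀ u ∈ U x, (x, u) ∈ Ω := fun u hu => hUΩ x ⟨hxU x, hu⟩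
    exact hOE _ _ (hUo x)
      (hψc.comp (continuous_const.prodMk continuous_id).continuousOn hm)
      (fun u hu u' hu' h => hinj x u u' (hm u hu) (hm u' hu') h)
      (fun u hu => hψE _ (hm u hu))
  refine ⟨U, fun x u => ψ (x, u), fun x => ⟨hUo x, hxU x, hφ x⟩, fun x y => ?_⟩
  -- `z ↦ σ (x · z)` inverts the chart at `x`
  have hinv : ∀ u ∈ U x, σ (mul x (ψ (x, u))) = u := fun u hu => by
    rw [hψ (x, u) (hUΩ x ⟨hxU x, hu⟩), hσ]
  refine ⟨fun z => ψ (y, σ (mul x z)), fun u hu => ?_, ?_⟩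
  · beta_reduce
    rw [hinv u hu.1]
  rintro _ ⟨u₀, hu₀, rfl⟩
  set W : Set M := (fun u => ψ (x, u)) '' (U x ∩ U y) with hW
  have hWo : IsOpen W := (hφ x).2.2.2 _ inter_subset_left ((hUo x).inter (hUo y))
  refine ⟨W, hWo, mem_image_of_mem _ hu₀, subset_rfl, ?_⟩
  -- a path from `y` to `x` through `u₀` moves one chart to the other
  obtain ⟨γ, hγ⟩ : JoinedIn (U x ∪ U y) y x :=
    (((hUp y).joinedIn y (hxU y) u₀ hu₀.2).mono subset_union_right).trans
      (((hUp x).joinedIn u₀ hu₀.1 x (hxU x)).mono subset_union_left)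
  have hγU : ∀ t, γ.extend t ∈ U x ∪ U y := fun t => hγ _
  have hγΩ : ∀ t, ∀ u ∈ U x ∩ U y, (γ.extend t, u) ∈ Ω := fun t u hu =>
    (hγU t).elim (fun h => hUΩ x ⟨h, hu.1⟩) fun h => hUΩ y ⟨h, hu.2⟩
  have hWσ : ∀ z ∈ W, σ (mul x z) ∈ U x ∩ U y ∧ ψ (x, σ (mul x z)) = z := by
    rintro _ ⟨u, hu, rfl⟩
    beta_reduce
    rw [hinv u hu.1]
    exact ⟨hu, rfl⟩
  have hσW : ContinuousOn (fun z => σ (mul x z)) W := by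
    refine hσc.comp (hcont.comp (continuous_const.prodMk continuous_id)).continuousOn ?_
    rintro _ ⟨u, hu, rfl⟩
    exact ⟨u, (hψ (x, u) (hUΩ x ⟨hxU x, hu.1⟩)).symm⟩
  have hHc : ContinuousOn (fun p : ℝ × M => ψ (γ.extend p.1, σ (mul x p.2))) (univ ×ˢ W) :=
    hψc.comp ((γ.continuous_extend.comp continuous_fst).continuousOn.prodMk
      (hσW.comp continuousOn_snd fun p hp => hp.2))
      fun p hp => hγΩ p.1 _ (hWσ p.2 hp.2).1
  refine ⟨fun p => ψ (γ.extend p.1, σ (mul x p.2)),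
    hHc.mono (Set.prod_mono (subset_univ _) subset_rfl), fun z hz => ?_, fun z hz => ?_,
    fun t _ => hOE _ _ hWo ?_ ?_ ?_⟩
  · simp only [Path.extend_zero]
  · simp only [Path.extend_one]
    exact (hWσ z hz).2
  · exact hHc.comp (continuous_const.prodMk continuous_id).continuousOn
      fun z hz => ⟨mem_univ _, hz⟩
  · intro z hz z' hz' h
    have := hinj _ _ _ (hγΩ t _ (hWσ z hz).1) (hγΩ t _ (hWσ z' hz').1) h
    rw [← (hWσ z hz).2, this, (hWσ z' hz').2]
  · exact fun z hz => hψE _ (hγΩ t _ (hWσ z hz).1)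
end

section
/- Let M be a topological n-manifold with boundary admitting a continuous binary operation · : M × M → M such that: (1) for some point e ∈ M ∖ ∂M the right shift ρ_e : M → M, x ↦ x·e, is injective; and (2) for every x ∈ M ∖ ∂M the left shift λ_x : M → M, y ↦ x·y, is injective. Then the interior M ∖ ∂M is isotopically orientable. -/
open Set Metric MeasureTheory Topology

/-! ### No smooth retraction onto the sphere -/

section InvarianceOfDomain
variable {E : Type*} [NormedAddCommGroup E] [InnerProductSpace ℝ E] [FiniteDimensional ℝ E]

/-- The function `t ↦ det (1 + t A)` is a polynomial of degree at most `dim E`, so its value at `1`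
is a fixed combination (Lagrange interpolation) of its values at points of `(0, ε)`. Integrating this
identity over `A = Dg x` replaces the remark that the integral is a polynomial in `t`. -/
theorem det_one_add_interpolation {ε : ℝ} (hε : 0 < ε) :
    ∃ (s : Finset ℝ) (c : ℝ → ℝ), (∀ t ∈ s, t ∈ Ioo 0 ε) ∧ ∑ t ∈ s, c t = 1 ∧
      ∀ A : E →L[ℝ] E, (1 + A).det = ∑ t ∈ s, c t * (1 + t • A).det := by
  classical
  obtain ⟨s, hsub, hcard⟩ :=
    (Ioo_infinite hε).exists_subset_card_eq (Module.finrank ℝ E + 1)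
  have hne : s.Nonempty := Finset.card_pos.mp (by omega)
  have hinj : Set.InjOn (id : ℝ → ℝ) (s : Set ℝ) := Function.injective_id.injOn
  refine ⟨s, fun t => (Lagrange.basis s id t).eval 1, fun t ht => hsub ht, ?_, fun A => ?_⟩
  · rw [← Polynomial.eval_finsetSum, Lagrange.sum_basis hinj hne, Polynomial.eval_one]
  · let b := Module.finBasis ℝ E
    let B := LinearMap.toMatrix b b (A : E →ₗ[ℝ] E)
    let q : Polynomial ℝ :=
      ((Polynomial.X : Polynomial ℝ) • B.map Polynomial.C
        + (1 : Matrix _ _ ℝ).map Polynomial.C).det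
    have hq : ∀ t : ℝ, q.eval t = (1 + t • A).det := by
      intro t
      rw [ContinuousLinearMap.det, ← LinearMap.det_toMatrix b, ← Polynomial.coe_evalRingHom,
        RingHom.map_det]
      congr 1
      ext i j
      simp [B, Matrix.one_apply, LinearMap.toMatrix_apply, Finsupp.single_apply, eq_comm, add_comm,
        apply_ite]
      exact mul_comm _ _
    have hdeg : q.degree < (s.card : WithBot ℕ) := by
      refine lt_of_le_of_lt Polynomial.degree_le_natDegree ?_
      have := Polynomial.natDegree_det_X_add_C_le B 1
      rw [Fintype.card_fin] at this
      rw [hcard]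
      exact_mod_cast Nat.lt_succ_of_le this
    have h := congrArg (Polynomial.eval 1) (Lagrange.eq_interpolate hinj hdeg)
    rw [hq 1, one_smul, Lagrange.interpolate_apply, Polynomial.eval_finsetSum] at h
    rw [h]
    refine Finset.sum_congr rfl fun t _ => ?_
    rw [Polynomial.eval_mul, Polynomial.eval_C, mul_comm, id, hq]

/-- If `‖r‖ = 1` everywhere, the range of the derivative of `r` at `x` is orthogonal to `r x`. -/
theorem det_fderiv_eq_zero_of_norm_eq_one {r : E → E} (hr : ContDiff ℝ 1 r)
    (h1 : ∀ x, ‖r x‖ = 1) (x : E) : (fderiv ℝ r x).det = 0 := by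
  have hd : HasFDerivAt r (fderiv ℝ r x) x := (hr.differentiable one_ne_zero x).hasFDerivAt
  by_contra hdet
  have hsurj := (LinearMap.equivOfDetNeZero (fderiv ℝ r x : E →ₗ[ℝ] E) hdet).surjective (r x)
  obtain ⟨v, hv⟩ := hsurj
  have hv : fderiv ℝ r x v = r x := hv
  have h2 := hd.norm_sq
  have h3 : HasFDerivAt (fun y => ‖r y‖ ^ 2) (0 : E →L[ℝ] ℝ) x := by
    simp only [h1]; exact hasFDerivAt_const _ _
  have h4 := congrArg (fun L => L v) (h2.unique h3)
  simp [hv, h1] at h4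

/-- There is no `C¹` map to the unit sphere which fixes the sphere pointwise. -/
theorem no_retraction {r : E → E} (hr : ContDiff ℝ 1 r) (h1 : ∀ x, ‖r x‖ = 1)
    (hs : ∀ x, ‖x‖ = 1 → r x = x) : False := by
  let _ : MeasurableSpace E := borel E
  have : BorelSpace E := ⟨rfl⟩
  let μ : Measure E := volume
  let g : E → E := fun x => r x - x
  have hg : ContDiff ℝ 1 g := hr.sub contDiff_id
  let g' : E → E →L[ℝ] E := fderiv ℝ g
  have hg'c : Continuous g' := hg.continuous_fderiv one_ne_zero
  have hgd : ∀ x, HasStrictFDerivAt g (g' x) x := fun x =>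
    hg.contDiffAt.hasStrictFDerivAt one_ne_zero
  have hcomp : IsCompact (closedBall (0 : E) 1) := isCompact_closedBall _ _
  have hdetc : Continuous fun p : ℝ × E => (1 + p.1 • g' p.2).det :=
    ContinuousLinearMap.continuous_det.comp (by fun_prop)
  -- a uniform bound on the derivative makes `g` Lipschitz on the ball
  obtain ⟨K, hK⟩ : ∃ K : NNReal, LipschitzOnWith K g (closedBall 0 1) := by
    obtain ⟨C, hC⟩ := hcomp.exists_bound_of_continuousOn hg'c.continuousOn
    refine ⟨C.toNNReal, (convex_closedBall (0 : E) 1).lipschitzOnWith_of_nnnorm_fderiv_le (𝕜 := ℝ)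
      (fun x _ => (hgd x).differentiableAt) fun x hx => ?_⟩
    rw [← NNReal.coe_le_coe]
    exact (hC x hx).trans (Real.le_coe_toNNReal C)
  obtain ⟨δ, hδ, hpos⟩ : ∃ δ > 0, ∀ t ∈ Ioo (0 : ℝ) δ, ∀ x ∈ closedBall (0 : E) 1,
      0 < (1 + t • g' x).det := by
    obtain ⟨u, v, hu, -, h0u, hv, huv⟩ := generalized_tube_lemma
      (isCompact_singleton (x := (0 : ℝ))) hcomp
      (isOpen_lt (continuous_const (y := (0 : ℝ))) hdetc) (by
        rintro ⟨t, x⟩ ⟨ht, -⟩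
        obtain rfl : t = 0 := ht
        show (0 : ℝ) < (1 + (0 : ℝ) • g' x).det
        simp [ContinuousLinearMap.det])
    obtain ⟨δ, hδ, hδu⟩ := Metric.isOpen_iff.mp hu 0 (h0u rfl)
    exact ⟨δ, hδ, fun t ht x hx => 
      huv (a := (t, x)) ⟨hδu (by simpa [abs_of_pos ht.1] using ht.2), hv hx⟩⟩
  let ε := min (min δ 1) ((K + 1 : ℝ)⁻¹)
  have hε : 0 < ε := lt_min (lt_min hδ one_pos) (by positivity)
  have hvol : ∀ t ∈ Ioo 0 ε, ∫ x in ball (0 : E) 1, (1 + t • g' x).det ∂μ = μ.real (ball 0 1) := by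
    intro t ht
    have htδ : t < δ := ht.2.trans_le ((min_le_left _ _).trans (min_le_left _ _))
    have ht1 : t < 1 := ht.2.trans_le ((min_le_left _ _).trans (min_le_right _ _))
    have htK : t * K < 1 := by
      have h : t < (K + 1 : ℝ)⁻¹ := ht.2.trans_le (min_le_right _ _)
      have hK0 : (0 : ℝ) ≤ K := K.2
      rw [lt_inv_comm₀ ht.1 (by positivity), lt_inv_comm₀ (by positivity) ht.1] at h
      have := mul_inv_cancel₀ (show (K + 1 : ℝ) ≠ 0 by positivity)
      nlinarith [ht.1]
    let f : E → E := fun x => x + t • g x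
    have hfd : ∀ x, HasStrictFDerivAt f (1 + t • g' x) x := fun x =>
      (hasStrictFDerivAt_id x).add ((hgd x).const_smul t)
    have hfc : Continuous f := continuous_iff_continuousAt.2 fun x => (hfd x).continuousAt
    have hinj : InjOn f (closedBall 0 1) := by
      intro x hx y hy hxy
      have h1 : x - y = t • (g y - g x) := by
        have : x + t • g x = y + t • g y := hxy
        rw [smul_sub, sub_eq_sub_iff_add_eq_add, this, add_comm]
      have h2 : ‖x - y‖ ≤ t * (K * ‖x - y‖) := by
        conv_lhs => rw [h1, norm_smul, Real.norm_of_nonneg ht.1.le, norm_sub_rev]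
        have := hK.norm_sub_le hx hy
        gcongr
        exact ht.1.le
      by_contra hne
      have : 0 < ‖x - y‖ := norm_pos_iff.2 (sub_ne_zero.2 hne)
      nlinarith
    have hsph : ∀ x, ‖x‖ = 1 → f x = x := fun x hx => by simp [f, g, hs x hx]
    have hmaps : MapsTo f (ball 0 1) (ball 0 1) := by
      intro x hx
      rw [mem_ball_zero_iff] at hx ⊢
      have : f x = (1 - t) • x + t • r x := by simp only [f, g]; module
      rw [this]
      calc _ ≤ ‖(1 - t) • x‖ + ‖t • r x‖ := norm_add_le _ _
        _ = (1 - t) * ‖x‖ + t := by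
          rw [norm_smul, norm_smul, h1, Real.norm_of_nonneg ht.1.le,
            Real.norm_of_nonneg (by linarith), mul_one]
        _ < 1 := by nlinarith
    have hopen : IsOpen (f '' ball 0 1) := by
      rw [isOpen_iff_mem_nhds]
      rintro _ ⟨x, hx, rfl⟩
      have hd := (hpos t ⟨ht.1, htδ⟩ x (ball_subset_closedBall hx)).ne'
      have := (hfd x).map_nhds_eq_of_surj (by
        rw [LinearMap.range_eq_top]
        exact (LinearMap.equivOfDetNeZero ((1 + t • g' x : E →L[ℝ] E) : E →ₗ[ℝ] E) hd).surjective)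
      rw [← this]
      exact Filter.image_mem_map (isOpen_ball.mem_nhds hx)
    -- the image is also closed in the ball, since the sphere is fixed pointwise
    have himage : f '' ball 0 1 = ball 0 1 := by
      refine Subset.antisymm hmaps.image_subset ?_
      have hclosed : IsClosed (f '' closedBall 0 1) := (hcomp.image hfc).isClosed
      have hsub : ∀ y ∈ ball (0 : E) 1, y ∈ f '' closedBall 0 1 → y ∈ f '' ball 0 1 := by
        rintro _ hy ⟨x, hx, rfl⟩
        refine ⟨x, ?_, rfl⟩
        rw [mem_closedBall_zero_iff] at hx
        rw [mem_ball_zero_iff] at hy ⊢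
        refine lt_of_le_of_ne hx fun h => ?_
        rw [hsph x h] at hy
        exact hy.ne h
      refine (convex_ball (0 : E) 1).isPreconnected.subset_left_of_subset_union hopen
        hclosed.isOpen_compl ?_ ?_ ?_
      · exact disjoint_compl_right_iff_subset.2 (image_mono ball_subset_closedBall)
      · intro y hy
        by_cases h : y ∈ f '' closedBall 0 1
        · exact Or.inl (hsub y hy h)
        · exact Or.inr h
      · have h0 : (0 : E) ∈ ball (0 : E) 1 := mem_ball_self one_pos
        exact ⟨f 0, hmaps h0, 0, h0, rfl⟩
    have hcv := integral_image_eq_integral_abs_det_fderiv_smul μ measurableSet_ball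
      (fun x _ => (hfd x).hasFDerivAt.hasFDerivWithinAt) (hinj.mono ball_subset_closedBall)
      (fun _ => (1 : ℝ))
    rw [himage] at hcv
    rw [setIntegral_const, smul_eq_mul, mul_one] at hcv
    rw [hcv]
    refine setIntegral_congr_fun measurableSet_ball fun x hx => ?_
    show _ = |(1 + t • g' x).det| • (1 : ℝ)
    rw [smul_eq_mul, mul_one, abs_of_pos (hpos t ⟨ht.1, htδ⟩ x (ball_subset_closedBall hx))]
  obtain ⟨s, c, hst, hc, hdet⟩ := det_one_add_interpolation (E := E) hε
  have hzero : ∫ x in ball (0 : E) 1, (1 + g' x).det ∂μ = 0 := by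
    refine integral_eq_zero_of_ae (Filter.Eventually.of_forall fun x => ?_)
    have : 1 + g' x = fderiv ℝ r x := by
      have h := (hr.differentiable one_ne_zero x).hasFDerivAt.sub (hasFDerivAt_id x)
      have h2 : g' x = fderiv ℝ r x - ContinuousLinearMap.id ℝ E := h.fderiv
      rw [h2]
      exact add_sub_cancel _ _
    show (1 + g' x).det = 0
    rw [this]
    exact det_fderiv_eq_zero_of_norm_eq_one hr h1 x
  have hone : ∫ x in ball (0 : E) 1, (1 + g' x).det ∂μ = μ.real (ball 0 1) := by
    rw [funext fun x => hdet (g' x), integral_finsetSum]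
    · rw [Finset.sum_congr rfl fun t ht => by rw [integral_const_mul, hvol t (hst t ht)],
        ← Finset.sum_mul, hc, one_mul]
    · intro t _
      refine Integrable.const_mul ?_ _
      have : Continuous fun x => (1 + t • g' x).det := hdetc.comp (Continuous.prodMk_right t)
      exact (this.continuousOn.integrableOn_compact hcomp).mono_set ball_subset_closedBall
  have hpos : 0 < μ.real (ball (0 : E) 1) :=
    ENNReal.toReal_pos (measure_ball_pos μ 0 one_pos).ne' measure_ball_lt_top.ne
  linarith

/-! ### Invariance of domain in Euclidean space -/

/-- Uniform approximation of continuous maps by `C¹` maps, via partitions of unity. -/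
theorem exists_contDiff_near (h : E → E) (hc : Continuous h) {δ : ℝ} (hδ : 0 < δ) :
    ∃ P : E → E, ContDiff ℝ 1 P ∧ ∀ x, ‖P x - h x‖ < δ := by
  obtain ⟨P, hP⟩ := exists_contMDiffMap_forall_mem_convex_of_local_const (n := 1)
    (modelWithCornersSelf ℝ E) (t := fun x => ball (h x) δ) (fun x => convex_ball _ _) (fun x =>
      ⟨h x, (hc.continuousAt.eventually (ball_mem_nhds (h x) hδ)).mono fun y hy => by
        rw [mem_ball_comm]; exact hy⟩)
  exact ⟨P, P.contMDiff.contDiff, fun x => by simpa [dist_eq_norm] using hP x⟩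

/-- If `h` had no zero, blending it with the identity near the sphere by a bump function and then
normalizing would give a retraction onto the sphere. -/
theorem exists_zero_of_contDiff {h : E → E} (hc : ContDiff ℝ 1 h)
    (hnear : ∀ x ∈ closedBall (0 : E) 1, ‖h x - x‖ < 1 / 2) :
    ∃ x ∈ closedBall (0 : E) 1, h x = 0 := by
  by_contra! hne
  let b : ContDiffBump (0 : E) := ⟨1 / 2, 1, by norm_num, by norm_num⟩
  let k : E → E := fun x => x + b x • (h x - x)
  have hk : ContDiff ℝ 1 k := contDiff_id.add (b.contDiff.smul (hc.sub contDiff_id))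
  have hout : ∀ x, 1 ≤ ‖x‖ → k x = x := fun x hx => by
    have : b x = 0 := b.zero_of_le_dist (by simpa using hx)
    simp [k, this]
  have hk0 : ∀ x, k x ≠ 0 := by
    intro x hx0
    rcases le_or_gt ‖x‖ (1 / 2) with hx | hx
    · have : b x = 1 := b.one_of_mem_closedBall (by simpa [b] using hx)
      refine hne x (mem_closedBall_zero_iff.2 (by linarith)) ?_
      simpa [k, this] using hx0
    rcases le_or_gt 1 ‖x‖ with hx1 | hx1
    · rw [hout x hx1] at hx0
      simp [hx0] at hx
      linarith
    · have h1 : x = - (b x • (h x - x)) := eq_neg_of_add_eq_zero_left hx0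
      have h2 : ‖x‖ ≤ 1 * ‖h x - x‖ := by
        conv_lhs => rw [h1, norm_neg, norm_smul, Real.norm_of_nonneg b.nonneg]
        gcongr
        exact b.le_one
      have := hnear x (mem_closedBall_zero_iff.2 hx1.le)
      linarith
  refine no_retraction (r := fun x => ‖k x‖⁻¹ • k x) ?_ ?_ ?_
  · exact ((hk.norm ℝ hk0).inv fun x => norm_ne_zero_iff.2 (hk0 x)).smul hk
  · intro x
    rw [norm_smul, norm_inv, norm_norm, inv_mul_cancel₀ (norm_ne_zero_iff.2 (hk0 x))]
  · intro x hx
    simp [hout x hx.ge, hx]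

/-- A form of Brouwer's fixed point theorem. -/
theorem exists_zero_of_near_id {h : E → E} (hc : ContinuousOn h (closedBall 0 1))
    (hnear : ∀ x ∈ closedBall (0 : E) 1, ‖h x - x‖ ≤ 1 / 4) :
    ∃ x ∈ closedBall (0 : E) 1, h x = 0 := by
  by_contra! hne
  have hcomp : IsCompact (closedBall (0 : E) 1) := isCompact_closedBall _ _
  obtain ⟨H, hH⟩ := ContinuousMap.exists_restrict_eq (isClosed_closedBall)
    (⟨_, hc.domRestrict⟩ : C(closedBall (0 : E) 1, E))
  have hH : ∀ x ∈ closedBall (0 : E) 1, H x = h x := fun x hx =>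
    congrArg (fun F => F ⟨x, hx⟩) hH
  obtain ⟨x₀, hx₀, hmin⟩ := hcomp.exists_isMinOn ⟨0, by simp⟩ hc.norm
  have hm : 0 < ‖h x₀‖ := norm_pos_iff.2 (hne x₀ hx₀)
  obtain ⟨P, hP, hPH⟩ := exists_contDiff_near H H.continuous
    (lt_min hm (show (0 : ℝ) < 1 / 4 by norm_num))
  obtain ⟨x, hx, hPx⟩ := exists_zero_of_contDiff hP fun x hx => by
    have h1 := (hPH x).trans_le (min_le_right _ _)
    have h2 := hnear x hx
    rw [hH x hx] at h1
    have := norm_add_le (P x - h x) (h x - x)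
    rw [sub_add_sub_cancel] at this
    linarith
  have h1 := (hPH x).trans_le (min_le_left _ _)
  rw [hPx, hH x hx, zero_sub, norm_neg] at h1
  exact (hmin hx).not_gt h1

/-- Invariance of domain for the unit ball. The map `Φ` pushes the part of the image lying within
`ε` of the missed point `c` radially to the sphere `S` of radius `ε` about `c`; on the rest of the image
the extended inverse `G` has no zero, and on `S` a small translation removes the zeros of a `C¹`
approximation `P` of `G`, because `P '' S` is a null set. -/
theorem mem_interior_image_closedBall {f : E → E} (hc : ContinuousOn f (closedBall 0 1))
    (hinj : InjOn f (closedBall 0 1)) : f 0 ∈ interior (f '' closedBall 0 1) := by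
  let _ : MeasurableSpace E := borel E
  have : BorelSpace E := ⟨rfl⟩
  by_contra hint
  have hcomp : IsCompact (closedBall (0 : E) 1) := isCompact_closedBall _ _
  have h0 : (0 : E) ∈ closedBall (0 : E) 1 := by simp
  -- `G` extends the inverse of `f` to the whole space
  obtain ⟨G, hG⟩ : ∃ G : C(E, E), ∀ x ∈ closedBall (0 : E) 1, G (f x) = x := by
    have : CompactSpace (closedBall (0 : E) 1) := isCompact_iff_compactSpace.1 hcomp
    have he : IsClosedEmbedding ((closedBall (0 : E) 1).domRestrict f) :=
      hc.domRestrict.isClosedEmbedding hinj.injective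
    obtain ⟨G, hG⟩ := ContinuousMap.exists_extension he
      (⟨Subtype.val, continuous_subtype_val⟩ : C(closedBall (0 : E) 1, E))
    exact ⟨G, fun x hx => congrArg (fun F => F ⟨x, hx⟩) hG⟩
  obtain ⟨ρ, hρ, hGρ⟩ := Metric.continuousAt_iff.1 (G.continuous.continuousAt (x := f 0))
    (1 / 16) (by norm_num)
  rw [hG 0 h0] at hGρ
  -- `f 0` is a limit of points `c` outside the image
  obtain ⟨c, hcK, hcd⟩ : ∃ c, c ∉ f '' closedBall 0 1 ∧ dist c (f 0) < ρ / 2 := by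
    rw [mem_interior_iff_mem_nhds, Metric.mem_nhds_iff] at hint
    push Not at hint
    obtain ⟨c, h1, h2⟩ := not_subset.1 (hint (ρ / 2) (by positivity))
    exact ⟨c, h2, h1⟩
  let ε := ρ / 2
  have hε : 0 < ε := by positivity
  have hsmall : ∀ y, dist y c ≤ ε → ‖G y‖ < 1 / 16 := by
    intro y hy
    have := hGρ (x := y) (by
      have := dist_triangle y c (f 0)
      simp only [ε] at hy
      linarith)
    simpa using this
  let S₁ := f '' closedBall 0 1 \ ball c ε
  have hS₁ : IsCompact S₁ := (hcomp.image_of_continuousOn hc).diff isOpen_ball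
  have hGS₁ : ∀ y ∈ S₁, G y ≠ 0 := by
    rintro _ ⟨⟨x, hx, rfl⟩, hxb⟩ h
    rw [hG x hx] at h
    subst h
    exact hxb (mem_ball'.2 hcd)
  obtain ⟨m, hm, hmS⟩ : ∃ m > 0, ∀ y ∈ S₁, m ≤ ‖G y‖ := by
    rcases S₁.eq_empty_or_nonempty with he | hne
    · exact ⟨1, one_pos, by simp [he]⟩
    · obtain ⟨y₀, hy₀, hmin⟩ := hS₁.exists_isMinOn hne G.continuous.norm.continuousOn
      exact ⟨‖G y₀‖, norm_pos_iff.2 (hGS₁ y₀ hy₀), fun y hy => hmin hy⟩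
  let δ := min (m / 2) (1 / 16)
  have hδ : 0 < δ := lt_min (by positivity) (by norm_num)
  obtain ⟨P, hP, hPG⟩ := exists_contDiff_near G G.continuous hδ
  -- the sphere is null, hence so is its image under the `C¹` map `P`
  obtain ⟨v, hvδ, hvP⟩ : ∃ v, ‖v‖ < δ ∧ v ∉ P '' sphere c ε := by
    have hnull : (volume : Measure E) (P '' sphere c ε) = 0 :=
      addHaar_image_eq_zero_of_differentiableOn_of_addHaar_eq_zero _
        (hP.differentiable one_ne_zero).differentiableOn
        (Measure.addHaar_sphere_of_ne_zero _ _ hε.ne')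
    by_contra! hall
    have hsub : ball (0 : E) δ ⊆ P '' sphere c ε := fun v hv => hall v (by simpa using hv)
    exact (measure_ball_pos volume (0 : E) hδ).ne' (measure_mono_null hsub hnull)
  have hP' : ∀ y, ‖P y - v - G y‖ < 2 * δ := by
    intro y
    have h1 := norm_sub_le (P y - G y) v
    have h2 := hPG y
    rw [show P y - v - G y = P y - G y - v by abel]
    linarith
  let Φ : E → E := fun y => c + max (ε / ‖y - c‖) 1 • (y - c)
  have hΦ₁ : ∀ y, ε ≤ ‖y - c‖ → Φ y = y := fun y hy => by
    have : ε / ‖y - c‖ ≤ 1 := div_le_one_of_le₀ hy (norm_nonneg _)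
    simp [Φ, max_eq_right this]
  have hΦ₂ : ∀ y, y ≠ c → ‖y - c‖ ≤ ε → Φ y ∈ sphere c ε := fun y hyc hy => by
    have hpos : 0 < ‖y - c‖ := norm_pos_iff.2 (sub_ne_zero.2 hyc)
    have : 1 ≤ ε / ‖y - c‖ := (one_le_div hpos).2 hy
    rw [mem_sphere_iff_norm]
    simp only [Φ, max_eq_left this, add_sub_cancel_left]
    rw [norm_smul, Real.norm_of_nonneg (by positivity), div_mul_cancel₀ _ hpos.ne']
  have hfc : ∀ x ∈ closedBall (0 : E) 1, f x ≠ c := fun x hx h => hcK ⟨x, hx, h⟩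
  have hΦf : ContinuousOn (fun x => Φ (f x)) (closedBall 0 1) := by
    refine continuousOn_const.add (ContinuousOn.smul (ContinuousOn.sup ?_ continuousOn_const)
      (hc.sub continuousOn_const))
    exact continuousOn_const.div (hc.sub continuousOn_const).norm fun x hx =>
      norm_ne_zero_iff.2 (sub_ne_zero.2 (hfc x hx))
  obtain ⟨x, hx, hx0⟩ := exists_zero_of_near_id (h := fun x => P (Φ (f x)) - v)
    ((hP.continuous.comp_continuousOn hΦf).sub continuousOn_const) (by
      intro x hx
      have hδ' : δ ≤ 1 / 16 := min_le_right _ _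
      rcases le_total ε ‖f x - c‖ with h | h
      · have := hP' (f x)
        simp only [hΦ₁ _ h]
        rw [hG x hx] at this
        linarith
      · have h1 := hΦ₂ _ (hfc x hx) h
        have h2 := hP' (Φ (f x))
        have h3 := hsmall (Φ (f x)) (by rw [mem_sphere.1 h1])
        have h4 := hsmall (f x) (by rwa [dist_eq_norm])
        rw [hG x hx] at h4
        have h5 := norm_add₃_le (a := P (Φ (f x)) - v - G (Φ (f x))) (b := G (Φ (f x))) (c := -x)
        rw [sub_add_cancel, ← sub_eq_add_neg, norm_neg] at h5
        linarith)
  rcases le_or_gt ε ‖f x - c‖ with h | h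
  · rw [hΦ₁ _ h] at hx0
    have h1 := hP' (f x)
    rw [hx0, zero_sub, norm_neg] at h1
    have h2 := hmS (f x) ⟨⟨x, hx, rfl⟩, by simpa [dist_eq_norm] using h⟩
    have h3 : δ ≤ m / 2 := min_le_left _ _
    linarith
  · exact hvP ⟨_, hΦ₂ _ (hfc x hx) h.le, sub_eq_zero.1 hx0⟩

/-- Brouwer's invariance of domain. -/
theorem isOpen_image_of_injOn {f : E → E} {U : Set E} (hU : IsOpen U) (hc : ContinuousOn f U)
    (hinj : InjOn f U) : IsOpen (f '' U) := by
  rw [isOpen_iff_mem_nhds]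
  rintro _ ⟨a, ha, rfl⟩
  obtain ⟨ε, hε, hεU⟩ := Metric.nhds_basis_closedBall.mem_iff.1 (hU.mem_nhds ha)
  let s : E → E := fun x => a + ε • x
  have hs : MapsTo s (closedBall 0 1) (closedBall a ε) := fun x hx => by
    rw [mem_closedBall_zero_iff] at hx
    rw [mem_closedBall_iff_norm]
    simp only [s, add_sub_cancel_left, norm_smul, Real.norm_of_nonneg hε.le]
    nlinarith
  have hsinj : Function.Injective s := fun x y h =>
    smul_right_injective E hε.ne' (add_left_cancel h)
  have hsc : Continuous s := by fun_prop
  have hsU : MapsTo s (closedBall 0 1) U := fun x hx => hεU (hs hx)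
  have h := mem_interior_image_closedBall (f := f ∘ s) (hc.comp hsc.continuousOn hsU)
    (hinj.comp hsinj.injOn hsU)
  rw [mem_interior_iff_mem_nhds] at h
  have hs0 : (f ∘ s) 0 = f a := by simp [s]
  rw [hs0] at h
  refine Filter.mem_of_superset h ?_
  rw [image_comp]
  exact image_mono hsU.image_subset

end InvarianceOfDomain

/-! ### Invariance of domain on manifolds -/

/-- Every point of `X` lies in the range of an open embedding of `E`. For `E = ℝⁿ` this is the
notion of an `n`-manifold without boundary, with charts inverted and defined on all of `ℝⁿ`. -/
def LocallyModelledOn (E X : Type*) [TopologicalSpace E] [TopologicalSpace X] : Prop :=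
  ∀ x : X, ∃ a : E → X, IsOpenEmbedding a ∧ x ∈ range a

theorem LocallyModelledOn.prod {E X : Type*} [TopologicalSpace E] [TopologicalSpace X]
    (h : LocallyModelledOn E X) : LocallyModelledOn (E × E) (X × X) := by
  rintro ⟨x, y⟩
  obtain ⟨a, ha, p, rfl⟩ := h x
  obtain ⟨b, hb, q, rfl⟩ := h y
  exact ⟨Prod.map a b, ha.prodMap hb, (p, q), rfl⟩

theorem LocallyModelledOn.congr {E F X : Type*} [TopologicalSpace E] [TopologicalSpace F]
    [TopologicalSpace X] (h : LocallyModelledOn E X) (φ : F ≃ₜ E) : LocallyModelledOn F X := by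
  intro x
  obtain ⟨a, ha, p, rfl⟩ := h x
  exact ⟨a ∘ φ, ha.comp φ.isOpenEmbedding, φ.symm p, by simp⟩

/-- Invariance of domain for manifolds. -/
theorem LocallyModelledOn.isOpenMap {E X Y : Type*} [NormedAddCommGroup E] [InnerProductSpace ℝ E]
    [FiniteDimensional ℝ E] [TopologicalSpace X] [TopologicalSpace Y]
    (hX : LocallyModelledOn E X) (hY : LocallyModelledOn E Y) {f : X → Y} (hf : Continuous f)
    (hinj : Function.Injective f) : IsOpenMap f := by
  rw [IsOpenMap]
  intro U hU
  rw [isOpen_iff_mem_nhds]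
  rintro _ ⟨x, hx, rfl⟩
  obtain ⟨a, ha, p, rfl⟩ := hX x
  obtain ⟨b, hb, q, hq⟩ := hY (f (a p))
  have hfa : Continuous (f ∘ a) := hf.comp ha.continuous
  let W := a ⁻¹' U ∩ (f ∘ a) ⁻¹' range b
  have hW : IsOpen W := (hU.preimage ha.continuous).inter (hb.isOpen_range.preimage hfa)
  -- the map `f` read in the charts `a` and `b`
  have : ∀ w : W, ∃ v, b v = f (a w) := fun w => w.2.2
  choose k hk using this
  have hkc : Continuous k := by
    rw [hb.isInducing.continuous_iff]
    exact (hfa.comp continuous_subtype_val).congr fun w => (hk w).symm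
  classical
  let g : E → E := fun w => if h : w ∈ W then k ⟨w, h⟩ else 0
  have hg : ∀ w (h : w ∈ W), g w = k ⟨w, h⟩ := fun w h => dif_pos h
  have hbg : ∀ w ∈ W, b (g w) = f (a w) := fun w h => by rw [hg w h, hk]
  have hgc : ContinuousOn g W := by
    rw [continuousOn_iff_continuous_domRestrict]
    exact hkc.congr fun w => (hg w w.2).symm
  have hginj : InjOn g W := fun v hv w hw h =>
    ha.injective (hinj (by rw [← hbg v hv, ← hbg w hw, h]))
  have ho := hb.isOpenMap _ (isOpen_image_of_injOn hW hgc hginj)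
  refine Filter.mem_of_superset (ho.mem_nhds ⟨g p, ⟨p, ⟨hx, q, hq⟩, rfl⟩, hbg p ⟨hx, q, hq⟩⟩) ?_
  rintro _ ⟨_, ⟨w, hw, rfl⟩, rfl⟩
  exact ⟨a w, hw.1, (hbg w hw).symm⟩

theorem LocallyModelledOn.exists_isPathConnected {E X : Type*} [NormedAddCommGroup E]
    [NormedSpace ℝ E] [TopologicalSpace X] (hX : LocallyModelledOn E X) {x : X} {D : Set X}
    (hD : IsOpen D) (hx : x ∈ D) : ∃ U ⊆ D, IsOpen U ∧ x ∈ U ∧ IsPathConnected U := by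
  obtain ⟨a, ha, p, rfl⟩ := hX x
  obtain ⟨r, hr, hrD⟩ := Metric.isOpen_iff.1 (hD.preimage ha.continuous) p hx
  exact ⟨a '' ball p r, image_subset_iff.2 hrD, ha.isOpenMap _ isOpen_ball,
    mem_image_of_mem a (mem_ball_self hr),
    ((convex_ball p r).isPathConnected ⟨p, mem_ball_self hr⟩).image ha.continuous⟩

/-! ### Charts from shifts and isotopies along paths -/

/-- If `j` is given on `V` by `j v = λ_s⁻¹ (k v)`, then `j '' V = λ_s⁻¹(k '' V)`. This turns openness
of charts and of the stages of the isotopies into openness of shifts. -/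
theorem image_eq_preimage_leftShift {X : Type*} {mul : X → X → X}
    (hl : ∀ x, Function.Injective (mul x)) (s : X) {V : Set X}
    {j k : X → X} (h : ∀ v ∈ V, mul s (j v) = k v) : j '' V = mul s ⁻¹' (k '' V) := by
  ext w
  constructor
  · rintro ⟨v, hv, rfl⟩
    exact ⟨v, hv, (h v hv).symm⟩
  · rintro ⟨v, hv, hw⟩
    exact ⟨v, hv, hl s (by rw [h v hv, hw])⟩

section Shifts
variable {X : Type*} [TopologicalSpace X] {mul : X → X → X}

/-- The case of a manifold without boundary. -/
theorem isotopicallyOrientable_of_injective_shifts_s2 {E : Type*} [NormedAddCommGroup E]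
    [InnerProductSpace ℝ E] [FiniteDimensional ℝ E] (hX : LocallyModelledOn E X)
    (hmul : Continuous fun p : X × X => mul p.1 p.2) (e : X)
    (hr : Function.Injective fun x => mul x e) (hl : ∀ x, Function.Injective (mul x)) :
    IsotopicallyOrientable X := by
  refine ⟨e, fun N hN heN => ?_⟩
  have hre : Continuous fun x => mul x e := hmul.comp (Continuous.prodMk_left e)
  have hlc : ∀ x, Continuous (mul x) := fun x => hmul.comp (Continuous.prodMk_right x)
  have hro : IsOpenMap fun x => mul x e := hX.isOpenMap hX hre hr
  have hlo : ∀ x, IsOpenMap (mul x) := fun x => hX.isOpenMap hX (hlc x) (hl x)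
  -- all left shifts at once, as one injective self-map of the `2n`-manifold `X × X`
  let Φ : X × X → X × X := fun p => (p.1, mul p.1 p.2)
  have hΦc : Continuous Φ := continuous_fst.prodMk hmul
  have hΦi : Function.Injective Φ := by
    rintro ⟨a, y⟩ ⟨b, z⟩ h
    obtain ⟨rfl, h⟩ := Prod.mk.inj h
    exact congrArg _ (hl a h)
  have hXX : LocallyModelledOn (WithLp 2 (E × E)) (X × X) :=
    hX.prod.congr (WithLp.prodContinuousLinearEquiv 2 ℝ E E).toHomeomorph
  have hΦ : IsOpenEmbedding Φ := .of_continuous_injective_isOpenMap hΦc hΦi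
    (hXX.isOpenMap hXX hΦc hΦi)
  -- `ι (a, b)` solves `a · y = b` for `y`, and is continuous in `(a, b)`
  have : Nonempty (X × X) := ⟨(e, e)⟩
  let Ψ := hΦ.toOpenPartialHomeomorph Φ
  let ι : X × X → X := fun p => (Ψ.symm p).2
  have hι : ∀ a y, ι (a, mul a y) = y := fun a y =>
    congrArg Prod.snd (Ψ.left_inv (x := (a, y)) (by simp [Ψ]))
  let O : Set (X × X) := Φ '' (univ ×ˢ N)
  have hO : IsOpen O := hΦ.isOpenMap _ (isOpen_univ.prod hN)
  have hιc : ContinuousOn ι O := continuous_snd.comp_continuousOn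
    (Ψ.continuousOn_symm.mono (by simp [Ψ, O]))
  have hιO : ∀ a b, (a, b) ∈ O → mul a (ι (a, b)) = b ∧ ι (a, b) ∈ N := by
    rintro _ _ ⟨⟨a, y⟩, ⟨-, hy⟩, h⟩
    obtain ⟨rfl, rfl⟩ := Prod.mk.inj h
    dsimp only at hy ⊢
    rw [hι]
    exact ⟨rfl, hy⟩
  have hU : ∀ x : X, ∃ U : Set X, IsOpen U ∧ x ∈ U ∧ IsPathConnected U ∧
      ∀ a ∈ U, ∀ u ∈ U, (a, mul u e) ∈ O := by
    intro x
    have hO' : IsOpen {p : X × X | (p.1, mul p.2 e) ∈ O} :=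
      hO.preimage (continuous_fst.prodMk (hre.comp continuous_snd))
    obtain ⟨A, B, hA, hB, hxA, hxB, hAB⟩ := isOpen_prod_iff.1 hO' x x
      ⟨(x, e), ⟨mem_univ _, heN⟩, rfl⟩
    obtain ⟨U, hUD, hUo, hxU, hUp⟩ := hX.exists_isPathConnected (hA.inter hB) ⟨hxA, hxB⟩
    exact ⟨U, hUo, hxU, hUp, fun a ha u hu => hAB (mk_mem_prod (hUD ha).1 (hUD hu).2)⟩
  choose U hUo hxU hUp hUO using hU
  let φ : X → X → X := fun x u => ι (x, mul u e)
  have hφ : ∀ x, ∀ u ∈ U x, mul x (φ x u) = mul u e := fun x u hu =>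
    (hιO _ _ (hUO x x (hxU x) u hu)).1
  have hφo : ∀ x, ∀ V ⊆ U x, IsOpen V → IsOpen (φ x '' V) := by
    intro x V hV hVo
    rw [image_eq_preimage_leftShift hl x fun v hv => hφ x v (hV hv)]
    exact (hro V hVo).preimage (hlc x)
  refine ⟨U, φ, fun x => ⟨hUo x, hxU x, ?_, ?_, ?_, hφo x⟩, fun x y => ?_⟩
  · exact hιc.comp (continuous_const.prodMk hre).continuousOn fun u hu => hUO x x (hxU x) u hu
  · intro u hu v hv h
    refine hr ?_
    show mul u e = mul v e
    rw [← hφ x u hu, ← hφ x v hv, h]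
  · exact fun u hu => (hιO _ _ (hUO x x (hxU x) u hu)).2
  refine ⟨fun w => ι (y, mul x w), fun u hu => ?_, ?_⟩
  · simp only [hφ x u hu.1]; rfl
  rintro _ ⟨u₀, hu₀, rfl⟩
  refine ⟨φ x '' (U x ∩ U y), hφo x _ inter_subset_left ((hUo x).inter (hUo y)),
    mem_image_of_mem _ hu₀, Subset.rfl, ?_⟩
  -- slide the left shift from `y` to `x` along a path through `u₀`
  obtain ⟨γ, hγ⟩ : JoinedIn (U x ∪ U y) y x :=
    (((hUp y).joinedIn y (hxU y) u₀ hu₀.2).mono subset_union_right).trans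
      (((hUp x).joinedIn u₀ hu₀.1 x (hxU x)).mono subset_union_left)
  have hγe : ∀ t, γ.extend t ∈ U x ∪ U y := fun t => by
    have : γ.extend t ∈ range γ := γ.extend_range ▸ mem_range_self t
    obtain ⟨s, hs⟩ := this
    exact hs ▸ hγ s
  have hmem : ∀ t, ∀ w ∈ φ x '' (U x ∩ U y), (γ.extend t, mul x w) ∈ O := by
    rintro t _ ⟨u, hu, rfl⟩
    rw [hφ x u hu.1]
    rcases hγe t with h | h
    · exact hUO x _ h u hu.1
    · exact hUO y _ h u hu.2
  refine ⟨fun p => ι (γ.extend p.1, mul x p.2), ?_, ?_, ?_, fun t _ => ⟨?_, ?_, ?_, ?_⟩⟩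
  · refine hιc.comp (Continuous.continuousOn ?_) fun p hp => hmem p.1 p.2 hp.2
    exact (γ.continuous_extend.comp continuous_fst).prodMk ((hlc x).comp continuous_snd)
  · intro w _
    simp
  · intro w _
    simp [hι]
  · exact hιc.comp (f := fun w => (γ.extend t, mul x w))
      (continuous_const.prodMk (hlc x)).continuousOn fun w hw => hmem t w hw
  · intro v hv w hw h
    refine hl x ?_
    rw [← (hιO _ _ (hmem t v hv)).1, ← (hιO _ _ (hmem t w hw)).1]
    exact congrArg _ h
  · exact fun w hw => (hιO _ _ (hmem t w hw)).2
  · intro V hV hVo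
    rw [image_eq_preimage_leftShift hl (γ.extend t) fun v hv => (hιO _ _ (hmem t v (hV hv))).1]
    exact (hlo x V hVo).preimage (hlc _)

end Shifts

/-! ### The interior of a manifold with boundary -/

section Boundary
variable {n : ℕ} {M : Type*} [TopologicalSpace M]

theorem mem_compl_manifoldBoundary_iff {x : M} : x ∈ (manifoldBoundary n M)ᶜ ↔
    ∃ a : EuclideanSpace ℝ (Fin n) → M, IsOpenEmbedding a ∧ x ∈ range a := by
  rw [manifoldBoundary, mem_compl_iff, mem_ofPred_eq, not_not]
  constructor
  · rintro ⟨U, hU, hx, ⟨h⟩⟩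
    exact ⟨Subtype.val ∘ h.symm, hU.isOpenEmbedding_subtypeVal.comp h.symm.isOpenEmbedding,
      h ⟨x, hx⟩, by simp⟩
  · rintro ⟨a, ha, hx⟩
    exact ⟨range a, ha.isOpen_range, hx, ⟨ha.isEmbedding.toHomeomorph.symm⟩⟩

theorem isOpen_compl_manifoldBoundary : IsOpen (manifoldBoundary n M)ᶜ := by
  rw [isOpen_iff_mem_nhds]
  intro x hx
  obtain ⟨a, ha, hxa⟩ := mem_compl_manifoldBoundary_iff.1 hx
  exact Filter.mem_of_superset (ha.isOpen_range.mem_nhds hxa) fun y hy =>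
    mem_compl_manifoldBoundary_iff.2 ⟨a, ha, hy⟩

theorem locallyModelledOn_interior :
    LocallyModelledOn (EuclideanSpace ℝ (Fin n)) ((manifoldBoundary n M)ᶜ : Set M) := by
  rintro ⟨x, hx⟩
  obtain ⟨a, ha, p, rfl⟩ := mem_compl_manifoldBoundary_iff.1 hx
  refine ⟨fun v => ⟨a v, mem_compl_manifoldBoundary_iff.2 ⟨a, ha, v, rfl⟩⟩, ?_, p, rfl⟩
  exact IsOpenEmbedding.of_comp _ isOpen_compl_manifoldBoundary.isOpenEmbedding_subtypeVal ha

/-- Read in a half-space chart at `f x`, the image under `f` of a small neighbourhood of `x` is open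
in `ℝⁿ` by invariance of domain, so `f x` has a neighbourhood homeomorphic to a ball. -/
theorem map_mem_interior (hM : IsTopManifoldWithBoundary n M) {f : M → M} (hf : Continuous f)
    (hinj : Function.Injective f) {x : M} (hx : x ∈ (manifoldBoundary n M)ᶜ) :
    f x ∈ (manifoldBoundary n M)ᶜ := by
  obtain ⟨a, ha, p, rfl⟩ := mem_compl_manifoldBoundary_iff.1 hx
  obtain ⟨U, φ, hU, hxU, hφh, hφi, hφc, hφo⟩ := hM (f (a p))
  have hfa : Continuous (f ∘ a) := hf.comp ha.continuous
  let W := (f ∘ a) ⁻¹' U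
  have hW : IsOpen W := hU.preimage hfa
  -- by invariance of domain, `f` maps a neighbourhood of the point onto a set open in all of `ℝⁿ`
  let O := (φ ∘ f ∘ a) '' W
  have hO : IsOpen O := isOpen_image_of_injOn hW (hφc.comp hfa.continuousOn fun w hw => hw)
    (hφi.comp (hinj.comp ha.injective).injOn fun w hw => hw)
  have hOh : O ⊆ halfSpace n := by
    rintro _ ⟨w, hw, rfl⟩
    exact hφh hw
  let U' := U ∩ φ ⁻¹' O
  have hU' : IsOpen U' := hφc.isOpen_inter_preimage hU hO
  let ψ : U' → EuclideanSpace ℝ (Fin n) := U'.domRestrict φ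
  have hψ : IsOpenEmbedding ψ := by
    refine .of_continuous_injective_isOpenMap (hφc.mono inter_subset_left).domRestrict
      (hφi.mono inter_subset_left).injective fun V hV => ?_
    have hV' : IsOpen (Subtype.val '' V) := hU'.isOpenMap_subtype_val V hV
    have hsub : Subtype.val '' V ⊆ U' := Subtype.coe_image_subset _ _
    obtain ⟨A, hA, hAV⟩ := hφo _ (hsub.trans inter_subset_left) hV'
    have hVO : φ '' (Subtype.val '' V) ⊆ O := by
      rintro _ ⟨v, hv, rfl⟩
      exact (hsub hv).2
    have : ψ '' V = A ∩ O := by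
      rw [show ψ = φ ∘ Subtype.val from rfl, image_comp]
      refine Subset.antisymm (fun v hv => ⟨?_, hVO hv⟩) fun v hv => ?_
      · rw [hAV] at hv
        exact hv.1
      · rw [hAV]
        exact ⟨hv.1, hOh hv.2⟩
    rw [this]
    exact hA.inter hO
  have hpO : φ (f (a p)) ∈ O := ⟨p, hxU, rfl⟩
  obtain ⟨r, hr, hrO⟩ := Metric.isOpen_iff.1 hO _ hpO
  let u := OpenPartialHomeomorph.univBall (φ (f (a p))) r
  have hu : IsOpenEmbedding u := u.isOpenEmbedding (by simp [u])
  have huO : ∀ v, ∃ y : U', ψ y = u v := by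
    intro v
    have h : u v ∈ ball (φ (f (a p))) r := by
      have := u.map_source (x := v) (by simp [u])
      rwa [OpenPartialHomeomorph.univBall_target _ hr] at this
    obtain ⟨w, hw, hwv⟩ := hrO h
    exact ⟨⟨f (a w), hw, w, hw, rfl⟩, hwv⟩
  choose b hb using huO
  have hbo : IsOpenEmbedding b := .of_comp _ hψ (by rwa [show ψ ∘ b = u from funext hb])
  refine mem_compl_manifoldBoundary_iff.2 ⟨Subtype.val ∘ b,
    hU'.isOpenEmbedding_subtypeVal.comp hbo, 0, ?_⟩
  have : b 0 = ⟨f (a p), hxU, hpO⟩ := hψ.injective (by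
    rw [hb]
    exact OpenPartialHomeomorph.univBall_apply_zero _ _)
  simp [this]

end Boundary

/-- A topological `n`-manifold with boundary carrying a continuous binary operation
whose right shift by some interior point `e` is injective and whose left shifts by
interior points are injective has isotopically orientable interior `M ∖ ∂M`. -/
theorem interior_isotopicallyOrientable_of_injective_shifts
    {n : ℕ} {M : Type*} [TopologicalSpace M] [T2Space M] [ParacompactSpace M]
    (hM : IsTopManifoldWithBoundary n M)
    (mul : M → M → M) (hcont : Continuous fun p : M × M => mul p.1 p.2)
    (e : M) (he : e ∈ (manifoldBoundary n M)ᶜ)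
    (h1 : Function.Injective fun x : M => mul x e)
    (h2 : ∀ x ∈ (manifoldBoundary n M)ᶜ, Function.Injective (mul x)) :
    IsotopicallyOrientable ((manifoldBoundary n M)ᶜ : Set M) := by
  have hlc : ∀ x, Continuous (mul x) := fun x => hcont.comp (Continuous.prodMk_right x)
  have hmem : ∀ x ∈ (manifoldBoundary n M)ᶜ, ∀ y ∈ (manifoldBoundary n M)ᶜ,
      mul x y ∈ (manifoldBoundary n M)ᶜ := fun x hx y hy =>
    map_mem_interior hM (hlc x) (h2 x hx) hy
  refine isotopicallyOrientable_of_injective_shifts_s2 (mul := fun x y => ⟨mul x y, hmem x x.2 y y.2⟩)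
    locallyModelledOn_interior ?_ ⟨e, he⟩ ?_ ?_
  · exact (hcont.comp (continuous_subtype_val.prodMap continuous_subtype_val)).subtype_mk _
  · exact fun x y h => Subtype.ext (h1 (congrArg Subtype.val h))
  · exact fun x y z h => Subtype.ext (h2 x x.2 (congrArg Subtype.val h))
end

section
/- The Möbius band is not isotopically orientable. -/
/-- The gluing relation on the square `[0,1] × [0,1]` identifying `(0, y)` with
`(1, 1 - y)`. -/
def mobiusRel (a b : unitInterval × unitInterval) : Prop :=
  a = b ∨ (a.1 = 0 ∧ b.1 = 1 ∧ (a.2 : ℝ) = 1 - (b.2 : ℝ)) ∨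
    (a.1 = 1 ∧ b.1 = 0 ∧ (a.2 : ℝ) = 1 - (b.2 : ℝ))

/-- The Möbius band: the quotient of the square `[0,1] × [0,1]` by the relation
identifying `(0, y)` with `(1, 1 - y)`, with the quotient topology. -/
def MobiusBand : Type := Quot mobiusRel

instance : TopologicalSpace MobiusBand :=
  inferInstanceAs (TopologicalSpace (Quot mobiusRel))

/-! ### Half-turn numbers of odd loops -/

theorem intValued_const {X : Type*} [TopologicalSpace X] [PreconnectedSpace X] {h : X → ℂ}
    (hc : Continuous h) (hk : ∀ x, ∃ k : ℤ, h x = k) (x y : X) : h x = h y := by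
  choose k hk using hk
  have hkc : Continuous k := by
    rw [Int.isClosedEmbedding_coe_real.isInducing.continuous_iff]
    have : (fun n : ℤ => (n : ℝ)) ∘ k = fun x => (h x).re := by
      funext x; simp [hk]
    rw [this]
    fun_prop
  rw [hk, hk, PreconnectedSpace.constant inferInstance hkc (x := x) (y := y)]

/-- `g` has a continuous logarithm `L` that grows by `n * π * I` over every interval of length
`π`. For `g (θ + π) = -g θ`, the number `n` is odd, and it is the winding number around `0` of
the closed curve that `g` traces over `[0, 2π]`. -/
def HasHalfTurns (g : ℝ → ℂ) (n : ℤ) : Prop :=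
  ∃ L : ℝ → ℂ, Continuous L ∧ (∀ θ, Complex.exp (L θ) = g θ) ∧
    ∀ θ, L (θ + Real.pi) = L θ + n * (Real.pi * Complex.I)

theorem piI_ne : (Real.pi * Complex.I : ℂ) ≠ 0 := by
  simp [Real.pi_ne_zero]

/-- Two logarithms of `g` differ by a constant, so the half-turn number is determined by `g`. -/
theorem HasHalfTurns.unique {g : ℝ → ℂ} {m n : ℤ} (hm : HasHalfTurns g m)
    (hn : HasHalfTurns g n) : m = n := by
  obtain ⟨L, hL, hLg, hLt⟩ := hm
  obtain ⟨K, hK, hKg, hKt⟩ := hn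
  have key := intValued_const (h := fun θ => (L θ - K θ) / (2 * Real.pi * Complex.I))
    (by fun_prop) (fun θ => by
      obtain ⟨k, hk⟩ := Complex.exp_eq_exp_iff_exists_int.1 ((hLg θ).trans (hKg θ).symm)
      refine ⟨k, ?_⟩
      have := Complex.two_pi_I_ne_zero
      rw [hk]; field_simp; ring) (0 + Real.pi) 0
  have h2 := Complex.two_pi_I_ne_zero
  rw [div_left_inj' h2, hLt, hKt] at key
  have : ((m : ℂ) - n) * (Real.pi * Complex.I) = 0 := by linear_combination key
  rcases mul_eq_zero.1 this with h | h
  · exact_mod_cast sub_eq_zero.1 h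
  · exact absurd h piI_ne

theorem HasHalfTurns.reflect {g : ℝ → ℂ} {n : ℤ} (h : HasHalfTurns g n) :
    HasHalfTurns (fun θ => g (-θ)) (-n) := by
  obtain ⟨L, hL, hLg, hLt⟩ := h
  refine ⟨fun θ => L (-θ), by fun_prop, fun θ => hLg _, fun θ => ?_⟩
  have := hLt (-(θ + Real.pi))
  rw [show -(θ + Real.pi) + Real.pi = -θ by ring] at this
  push_cast
  simp only [this]; ring

/-- A homotopy of nonvanishing odd loops (`g (θ + π) = -g θ`) has a constant half-turn number,
which is odd because `exp (n * π * I) = -1`. -/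
theorem exists_halfTurns_homotopy {G : ℝ × ℝ → ℂ}
    (hG : ContinuousOn G (Set.Icc 0 1 ×ˢ Set.univ))
    (h0 : ∀ t ∈ Set.Icc (0 : ℝ) 1, ∀ θ, G (t, θ) ≠ 0)
    (hodd : ∀ t ∈ Set.Icc (0 : ℝ) 1, ∀ θ, G (t, θ + Real.pi) = -G (t, θ)) :
    ∃ n : ℤ, Odd n ∧ ∀ t ∈ Set.Icc (0 : ℝ) 1, HasHalfTurns (fun θ => G (t, θ)) n := by
  -- clamping `t` gives a map on the simply connected space `ℝ × ℝ`
  let r : ℝ → ℝ := fun t => Set.projIcc (0 : ℝ) 1 zero_le_one t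
  have hr : Continuous r := by fun_prop
  have hrm : ∀ t, r t ∈ Set.Icc (0 : ℝ) 1 := fun t => (Set.projIcc (0 : ℝ) 1 zero_le_one t).2
  have hF : Continuous fun q : ℝ × ℝ => G (r q.1, q.2) :=
    hG.comp_continuous (by fun_prop) fun q => ⟨hrm _, trivial⟩
  let F : C(ℝ × ℝ, ℂ) := ⟨_, hF⟩
  obtain ⟨L, ⟨-, hL⟩, -⟩ := Complex.isCoveringMapOn_exp.existsUnique_continuousMap_lifts
    (f := F) (a₀ := (0, 0)) (e₀ := Complex.log (F (0, 0)))
    (Complex.exp_log (h0 _ (hrm _) _)) (fun q => h0 _ (hrm _) _)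
  have hLF : ∀ q, Complex.exp (L q) = G (r q.1, q.2) := fun q => congrFun hL q
  have hint : ∀ q : ℝ × ℝ, ∃ k : ℤ, L (q.1, q.2 + Real.pi) - L q =
      (2 * k + 1 : ℤ) * (Real.pi * Complex.I) := by
    intro q
    have : Complex.exp (L (q.1, q.2 + Real.pi)) = Complex.exp (L q + Real.pi * Complex.I) := by
      rw [Complex.exp_add, hLF, hLF, Complex.exp_pi_mul_I, hodd _ (hrm _)]; ring
    obtain ⟨k, hk⟩ := Complex.exp_eq_exp_iff_exists_int.1 this
    exact ⟨k, by rw [hk]; push_cast; ring⟩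
  obtain ⟨k, hk⟩ := hint (0, 0)
  refine ⟨2 * k + 1, ⟨k, rfl⟩, fun t ht => ⟨fun θ => L (t, θ), by fun_prop, fun θ => ?_, fun θ => ?_⟩⟩
  · rw [hLF]; simp [r, Set.projIcc_of_mem _ ht]
  · have key := intValued_const
      (h := fun q : ℝ × ℝ => (L (q.1, q.2 + Real.pi) - L q) / (Real.pi * Complex.I))
      (by fun_prop) (fun q => by
        obtain ⟨k, hk⟩ := hint q
        exact ⟨2 * k + 1, by simp only [hk]; rw [mul_div_cancel_right₀ _ piI_ne]⟩) (t, θ) (0, 0)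
    rw [div_left_inj' piI_ne, hk] at key
    rw [← key]; ring

/-! ### Coordinates on the Möbius band -/

/-- The class of the point `(x, y)`, with both coordinates clamped to `[0,1]`. -/
noncomputable def square (x y : ℝ) : MobiusBand :=
  Quot.mk mobiusRel (Set.projIcc 0 1 zero_le_one x, Set.projIcc 0 1 zero_le_one y)

theorem continuous_square : Continuous fun q : ℝ × ℝ => square q.1 q.2 := by
  have h : Continuous (Quot.mk mobiusRel : unitInterval × unitInterval → MobiusBand) :=
    continuous_quot_mk
  exact h.comp (by fun_prop)

theorem square_glue (y : ℝ) : square 1 (1 / 2 - y) = square 0 (1 / 2 + y) := by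
  apply Quot.sound
  refine Or.inr (Or.inr ⟨?_, ?_, ?_⟩)
  · simp
  · simp
  · simp only [Set.coe_projIcc]
    grind

/-- The strip `[-1, 2] × [-1/2, 1/2]`, three copies of the square, wrapped around the
Möbius band; `s ↦ strip (s, 0)` runs along the core circle. -/
noncomputable def strip (q : ℝ × ℝ) : MobiusBand :=
  if q.1 ≤ 0 then square (q.1 + 1) (1 / 2 - q.2)
  else if q.1 ≤ 1 then square q.1 (1 / 2 + q.2)
  else square (q.1 - 1) (1 / 2 - q.2)

theorem continuous_strip : Continuous strip := by
  have h : ∀ f g : ℝ × ℝ → ℝ, Continuous f → Continuous g →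
      Continuous fun q => square (f q) (g q) :=
    fun f g hf hg => continuous_square.comp (hf.prodMk hg)
  unfold strip
  refine Continuous.if_le (h _ _ (by fun_prop) (by fun_prop))
    (Continuous.if_le (h _ _ (by fun_prop) (by fun_prop)) (h _ _ (by fun_prop) (by fun_prop))
      (by fun_prop) (by fun_prop) ?_) (by fun_prop) (by fun_prop) ?_
  · intro q hq
    have := square_glue (-q.2)
    simp only [sub_neg_eq_add, ← sub_eq_add_neg] at this
    rw [hq, this, sub_self]
  · intro q hq
    rw [hq, if_pos zero_le_one, zero_add, square_glue]

/-- One trip around the band reflects the transverse coordinate. -/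
theorem strip_add_one {x : ℝ} (h : -1 < x) (h' : x ≤ 1) (y : ℝ) :
    strip (x + 1, y) = strip (x, -y) := by
  unfold strip
  by_cases hx : x ≤ 0
  · simp [hx, show ¬ x + 1 ≤ 0 by linarith]
  · simp [hx, h', show ¬ x + 1 ≤ 0 by linarith, ← sub_eq_add_neg]

/-- Cutting the Möbius band along the arc `x = c` and unrolling it onto the rectangle
`(c, 1 + c] × [0,1]` in the plane. -/
noncomputable def unroll (c : Set.Ioo (0 : ℝ) 1) : MobiusBand → ℂ :=
  Quot.lift (fun a => if (c : ℝ) < a.1 then ((a.1 : ℝ) : ℂ) + ((a.2 : ℝ) : ℂ) * Complex.I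
    else (((a.1 : ℝ) + 1 : ℝ) : ℂ) + ((1 - (a.2 : ℝ) : ℝ) : ℂ) * Complex.I) (by
    obtain ⟨c, hc0, hc1⟩ := c
    rintro ⟨a, a'⟩ ⟨b, b'⟩ (h | ⟨h1, h2, h3⟩ | ⟨h1, h2, h3⟩)
    · rw [h]
    · simp only at h1 h2 h3
      subst h1 h2
      simp [h3, hc1, not_lt.2 hc0.le]
    · simp only at h1 h2 h3
      subst h1 h2
      simp [h3, hc1, not_lt.2 hc0.le])

theorem unroll_mk (c : Set.Ioo (0 : ℝ) 1) (a : unitInterval × unitInterval) :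
    unroll c (Quot.mk mobiusRel a) =
      if (c : ℝ) < a.1 then ((a.1 : ℝ) : ℂ) + ((a.2 : ℝ) : ℂ) * Complex.I
      else (((a.1 : ℝ) + 1 : ℝ) : ℂ) + ((1 - (a.2 : ℝ) : ℝ) : ℂ) * Complex.I := rfl

theorem unroll_re_im (c : Set.Ioo (0 : ℝ) 1) (a : unitInterval × unitInterval) :
    (unroll c (Quot.mk mobiusRel a)).re = (if (c : ℝ) < a.1 then (a.1 : ℝ) else a.1 + 1) ∧
    (unroll c (Quot.mk mobiusRel a)).im = (if (c : ℝ) < a.1 then (a.2 : ℝ) else 1 - a.2) := by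
  rw [unroll_mk]
  split_ifs <;> simp

theorem unroll_injective (c : Set.Ioo (0 : ℝ) 1) : Function.Injective (unroll c) := by
  rintro ⟨a⟩ ⟨b⟩ h
  obtain ⟨h1, h2⟩ := unroll_re_im c a
  obtain ⟨h3, h4⟩ := unroll_re_im c b
  change unroll c (Quot.mk mobiusRel a) = unroll c (Quot.mk mobiusRel b) at h
  rw [h, h3] at h1
  rw [h, h4] at h2
  have ha0 := a.1.2.1
  have ha1 := a.1.2.2
  have hb0 := b.1.2.1
  have hb1 := b.1.2.2
  apply Quot.sound
  have e0 : ∀ x : unitInterval, x = 0 ↔ (x : ℝ) = 0 := fun x => Subtype.ext_iff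
  have e1 : ∀ x : unitInterval, x = 1 ↔ (x : ℝ) = 1 := fun x => Subtype.ext_iff
  simp only [mobiusRel, Prod.ext_iff, Subtype.ext_iff, Set.Icc.coe_zero, Set.Icc.coe_one]
  split_ifs at h1 h2
  · exact Or.inl ⟨h1.symm, h2.symm⟩
  · exact Or.inr (Or.inl ⟨by linarith, by linarith, by linarith⟩)
  · exact Or.inr (Or.inr ⟨by linarith, by linarith, by linarith⟩)
  · exact Or.inl ⟨by linarith, by linarith⟩

/-- The Möbius band minus the arc `x = c`. -/
def cutBand (c : Set.Ioo (0 : ℝ) 1) : Set MobiusBand := {m | (unroll c m).re ≠ 1 + c}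

theorem mk_mem_cutBand (c : Set.Ioo (0 : ℝ) 1) (a : unitInterval × unitInterval) :
    Quot.mk mobiusRel a ∈ cutBand c ↔ (a.1 : ℝ) ≠ c := by
  change (unroll c (Quot.mk mobiusRel a)).re ≠ 1 + c ↔ _
  rw [(unroll_re_im c a).1]
  have := a.1.2.2
  have := c.2.1
  grind

theorem isQuotientMap_mk : Topology.IsQuotientMap (Y := MobiusBand) (Quot.mk mobiusRel) :=
  isQuotientMap_quot_mk

theorem isOpen_cutBand (c : Set.Ioo (0 : ℝ) 1) : IsOpen (cutBand c) := by
  have hq := isQuotientMap_mk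
  rw [← hq.isOpen_preimage]
  have h : IsOpen {a : unitInterval × unitInterval | (a.1 : ℝ) ≠ c} :=
    isOpen_ne_fun (by fun_prop) (by fun_prop)
  convert h using 1
  ext a
  exact mk_mem_cutBand c a

theorem continuousOn_unroll (c : Set.Ioo (0 : ℝ) 1) : ContinuousOn (unroll c) (cutBand c) := by
  have hq := isQuotientMap_mk
  rw [hq.continuousOn_isOpen_iff (isOpen_cutBand c)]
  intro a ha
  have ha : (a.1 : ℝ) ≠ c := (mk_mem_cutBand c a).1 ha
  apply ContinuousAt.continuousWithinAt
  rcases lt_or_gt_of_ne ha with h | h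
  · have hev : ∀ᶠ b : unitInterval × unitInterval in nhds a, (b.1 : ℝ) < c :=
      (isOpen_lt (by fun_prop) (by fun_prop)).mem_nhds h
    refine ContinuousAt.congr_of_eventuallyEq (f := fun b : unitInterval × unitInterval =>
      (((b.1 : ℝ) + 1 : ℝ) : ℂ) + ((1 - (b.2 : ℝ) : ℝ) : ℂ) * Complex.I) (by fun_prop) ?_
    filter_upwards [hev] with b hb
    simp only [Function.comp, unroll_mk, if_neg hb.not_gt]
  · have hev : ∀ᶠ b : unitInterval × unitInterval in nhds a, (c : ℝ) < b.1 :=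
      (isOpen_lt (by fun_prop) (by fun_prop)).mem_nhds h
    refine ContinuousAt.congr_of_eventuallyEq (f := fun b : unitInterval × unitInterval =>
      ((b.1 : ℝ) : ℂ) + ((b.2 : ℝ) : ℂ) * Complex.I) (by fun_prop) ?_
    filter_upwards [hev] with b hb
    simp only [Function.comp, unroll_mk, if_pos hb]

theorem unroll_square (c : Set.Ioo (0 : ℝ) 1) {x y : ℝ} (hx : x ∈ Set.Icc (0 : ℝ) 1)
    (hy : y ∈ Set.Icc (0 : ℝ) 1) :
    (unroll c (square x y)).re = (if (c : ℝ) < x then x else x + 1) ∧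
    (unroll c (square x y)).im = (if (c : ℝ) < x then y else 1 - y) := by
  have := unroll_re_im c (Set.projIcc 0 1 zero_le_one x, Set.projIcc 0 1 zero_le_one y)
  simpa [square, Set.projIcc_of_mem _ hx, Set.projIcc_of_mem _ hy] using this

/-- `strip` followed by `unroll` at `c = 1/2`, in coordinates; it shows that `strip` separates
points whose first coordinates differ by less than `1`. -/
theorem unroll_strip {x y : ℝ} (h1 : -(1 / 2) < x) (h2 : x < 3 / 2) (h3 : -(1 / 2) < y)
    (h4 : y < 1 / 2) :
    (unroll ⟨1 / 2, by norm_num⟩ (strip (x, y))).re = (if 1 / 2 < x then x else x + 1) ∧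
    (unroll ⟨1 / 2, by norm_num⟩ (strip (x, y))).im =
      (if 1 / 2 < x then 1 / 2 + y else 1 / 2 - y) := by
  unfold strip
  simp only
  split_ifs
  all_goals
    rw [(unroll_square _ ⟨by linarith, by linarith⟩ ⟨by linarith, by linarith⟩).1,
      (unroll_square _ ⟨by linarith, by linarith⟩ ⟨by linarith, by linarith⟩).2]
    simp only
    grind

/-! ### Small circles around the core -/

/-- The point at angle `θ` on the circle of radius `ρ` around the core point `strip (s, 0)`. -/
noncomputable def circlePt (s ρ θ : ℝ) : MobiusBand :=
  strip (s + ρ * Real.cos θ, ρ * Real.sin θ)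

theorem circlePt_antipode_ne {s ρ : ℝ} (hs : s ∈ Set.Icc (0 : ℝ) 1) (h0 : 0 < ρ)
    (h1 : ρ < 1 / 4) (θ : ℝ) : circlePt s ρ θ ≠ circlePt s ρ (θ + Real.pi) := by
  intro h
  obtain ⟨hs0, hs1⟩ := hs
  simp only [circlePt, Real.cos_add_pi, Real.sin_add_pi] at h
  have c1 : ρ * Real.cos θ ≤ ρ := by nlinarith [Real.cos_le_one θ]
  have c2 : -ρ ≤ ρ * Real.cos θ := by nlinarith [Real.neg_one_le_cos θ]
  have c3 : ρ * Real.sin θ ≤ ρ := by nlinarith [Real.sin_le_one θ]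
  have c4 : -ρ ≤ ρ * Real.sin θ := by nlinarith [Real.neg_one_le_sin θ]
  have hsq : (ρ * Real.cos θ) ^ 2 + (ρ * Real.sin θ) ^ 2 = ρ ^ 2 := by
    rw [mul_pow, mul_pow, ← mul_add, Real.cos_sq_add_sin_sq, mul_one]
  rw [mul_neg, mul_neg] at h
  generalize ρ * Real.cos θ = u at *
  generalize ρ * Real.sin θ = v at *
  obtain ⟨r1, i1⟩ := unroll_strip (x := s + u) (y := v) (by linarith) (by linarith) (by linarith)
    (by linarith)
  obtain ⟨r2, i2⟩ := unroll_strip (x := s + -u) (y := -v) (by linarith) (by linarith)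
    (by linarith) (by linarith)
  rw [h, r2] at r1
  rw [h, i2] at i1
  have hu : u = 0 := by grind
  have hv : v = 0 := by subst hu; grind
  subst hu hv
  nlinarith

theorem circlePt_add_two_pi (s ρ θ : ℝ) :
    circlePt s ρ (θ + Real.pi + Real.pi) = circlePt s ρ θ := by
  simp [circlePt]

/-- At the end of the trip around the core, small circles are traversed backwards. -/
theorem circlePt_one {ρ : ℝ} (h0 : 0 < ρ) (h1 : ρ < 1 / 4) (θ : ℝ) :
    circlePt 1 ρ θ = circlePt 0 ρ (-θ) := by
  have c1 : ρ * Real.cos θ ≤ ρ := by nlinarith [Real.cos_le_one θ]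
  have c2 : -ρ ≤ ρ * Real.cos θ := by nlinarith [Real.neg_one_le_cos θ]
  simp only [circlePt, Real.cos_neg, Real.sin_neg, mul_neg, zero_add]
  rw [add_comm, strip_add_one (by linarith) (by linarith)]

theorem exists_circlePt_mem {O : Set MobiusBand} (hO : IsOpen O) {s₀ : ℝ}
    (h : strip (s₀, 0) ∈ O) :
    ∃ ε > 0, ∀ s, |s - s₀| < ε → ∀ ρ, 0 < ρ → ρ < ε → ∀ θ, circlePt s ρ θ ∈ O := by
  obtain ⟨ε, hε, hb⟩ := Metric.isOpen_iff.1 (hO.preimage continuous_strip) _ h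
  refine ⟨ε / 2, by linarith, fun s hs ρ h0 hρ θ => hb ?_⟩
  have c1 : ρ * Real.cos θ ≤ ρ := by nlinarith [Real.cos_le_one θ]
  have c2 : -ρ ≤ ρ * Real.cos θ := by nlinarith [Real.neg_one_le_cos θ]
  have c3 : ρ * Real.sin θ ≤ ρ := by nlinarith [Real.sin_le_one θ]
  have c4 : -ρ ≤ ρ * Real.sin θ := by nlinarith [Real.neg_one_le_sin θ]
  rw [abs_lt] at hs
  rw [Metric.mem_ball, Prod.dist_eq, max_lt_iff, Real.dist_eq, Real.dist_eq, abs_lt, abs_lt]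
  exact ⟨⟨by linarith, by linarith⟩, by linarith, by linarith⟩

/-- The vector from `F` of the antipode to `F` of the point at angle `θ`, as the point runs
around the circle of radius `ρ` about `strip (s, 0)`. -/
noncomputable def chordLoop (F : MobiusBand → ℂ) (s ρ θ : ℝ) : ℂ :=
  F (circlePt s ρ θ) - F (circlePt s ρ (θ + Real.pi))

/-- If the chord loop moves through an isotopy `F`, a centre `s` and a radius `ρ`, it makes
the same odd number of half-turns throughout: injectivity keeps the chord nonzero, and it
changes sign when the two endpoints swap. -/
theorem exists_halfTurns_chordLoop {F : ℝ × MobiusBand → ℂ} {O : Set MobiusBand}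
    (hF : ContinuousOn F (Set.Icc 0 1 ×ˢ O))
    (hinj : ∀ t ∈ Set.Icc (0 : ℝ) 1, Set.InjOn (fun m => F (t, m)) O)
    {s ρ : ℝ → ℝ} (hsc : Continuous s) (hρc : Continuous ρ)
    (hs : ∀ t ∈ Set.Icc (0 : ℝ) 1, s t ∈ Set.Icc (0 : ℝ) 1)
    (hρ : ∀ t ∈ Set.Icc (0 : ℝ) 1, 0 < ρ t ∧ ρ t < 1 / 4)
    (hO : ∀ t ∈ Set.Icc (0 : ℝ) 1, ∀ θ, circlePt (s t) (ρ t) θ ∈ O) :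
    ∃ n : ℤ, Odd n ∧ ∀ t ∈ Set.Icc (0 : ℝ) 1,
      HasHalfTurns (chordLoop (fun m => F (t, m)) (s t) (ρ t)) n := by
  have hc : ∀ f : ℝ × ℝ → ℝ, Continuous f → ContinuousOn
      (fun q : ℝ × ℝ => F (q.1, circlePt (s q.1) (ρ q.1) (f q))) (Set.Icc 0 1 ×ˢ Set.univ) := by
    intro f hf
    refine hF.comp (Continuous.continuousOn ?_) fun q hq => ⟨hq.1, hO _ hq.1 _⟩
    exact continuous_fst.prodMk (continuous_strip.comp (by fun_prop))
  refine exists_halfTurns_homotopy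
    (G := fun q => chordLoop (fun m => F (q.1, m)) (s q.1) (ρ q.1) q.2) ?_ ?_ ?_
  · exact (hc Prod.snd continuous_snd).sub (hc (fun q => q.2 + Real.pi) (by fun_prop))
  · intro t ht θ h
    exact circlePt_antipode_ne (hs t ht) (hρ t ht).1 (hρ t ht).2 θ
      (hinj t ht (hO t ht _) (hO t ht _) (sub_eq_zero.1 h))
  · intro t ht θ
    simp only [chordLoop, circlePt_add_two_pi]
    ring

/-- The half-turn number of an injective map at a core point does not depend on the radius
of the circle, and is locally constant along the core. -/
theorem exists_local_halfTurns {F : MobiusBand → ℂ} {O : Set MobiusBand} (hO : IsOpen O)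
    (hF : ContinuousOn F O) (hinj : Set.InjOn F O) {s₀ : ℝ} (hs₀ : s₀ ∈ Set.Icc (0 : ℝ) 1)
    (hm : strip (s₀, 0) ∈ O) :
    ∃ n : ℤ, Odd n ∧ ∃ ε > 0, ∀ s ∈ Set.Icc (0 : ℝ) 1, |s - s₀| < ε →
      ∀ ρ, 0 < ρ → ρ < ε → HasHalfTurns (chordLoop F s ρ) n := by
  obtain ⟨ε', hε', hmem'⟩ := exists_circlePt_mem hO hm
  obtain ⟨ε, hε, hε4, hmem⟩ : ∃ ε > 0, ε ≤ 1 / 4 ∧ ∀ s, |s - s₀| < ε → ∀ ρ, 0 < ρ → ρ < ε →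
      ∀ θ, circlePt s ρ θ ∈ O :=
    ⟨min ε' (1 / 4), by positivity, min_le_right _ _, fun s hs ρ h0 h1 =>
      hmem' s (hs.trans_le (min_le_left _ _)) ρ h0 (h1.trans_le (min_le_left _ _))⟩
  -- the segment from `(s₀, ε / 2)` to `(s, ρ)` in the parameter space
  have key : ∀ s ∈ Set.Icc (0 : ℝ) 1, |s - s₀| < ε → ∀ ρ, 0 < ρ → ρ < ε →
      ∃ n : ℤ, Odd n ∧ HasHalfTurns (chordLoop F s₀ (ε / 2)) n ∧
        HasHalfTurns (chordLoop F s ρ) n := by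
    intro s hs hss ρ h0 h1
    have hρ : ∀ t ∈ Set.Icc (0 : ℝ) 1, 0 < (1 - t) * (ε / 2) + t * ρ ∧
        (1 - t) * (ε / 2) + t * ρ < ε := by
      rintro t ⟨ht0, ht1⟩
      exact convex_Ioo 0 ε ⟨by linarith, by linarith⟩ ⟨h0, h1⟩ (sub_nonneg.2 ht1) ht0 (by ring)
    obtain ⟨n, hn, hall⟩ := exists_halfTurns_chordLoop (F := fun q => F q.2) (O := O)
      (s := fun t => (1 - t) * s₀ + t * s) (ρ := fun t => (1 - t) * (ε / 2) + t * ρ)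
      (hF.comp continuousOn_snd fun q hq => hq.2) (fun _ _ => hinj) (by fun_prop) (by fun_prop)
      (fun t ht => convex_Icc 0 1 hs₀ hs (sub_nonneg.2 ht.2) ht.1 (by ring))
      (fun t ht => ⟨(hρ t ht).1, (hρ t ht).2.trans_le hε4⟩)
      (fun t ht => hmem _ (by
          rw [show (1 - t) * s₀ + t * s - s₀ = t * (s - s₀) by ring, abs_mul, abs_of_nonneg ht.1]
          nlinarith [abs_nonneg (s - s₀), ht.2]) _ (hρ t ht).1 (hρ t ht).2)
    refine ⟨n, hn, ?_, ?_⟩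
    · simpa using hall 0 (by simp)
    · simpa using hall 1 (by simp)
  obtain ⟨n, hn, hbase, -⟩ := key s₀ hs₀ (by simpa using hε) (ε / 2) (by linarith) (by linarith)
  refine ⟨n, hn, ε, hε, fun s hs hss ρ h0 h1 => ?_⟩
  obtain ⟨m, -, hm1, hm2⟩ := key s hs hss ρ h0 h1
  rwa [hbase.unique hm1]

/-- Isotopic injective maps `f` and `g` have the same half-turn number on small circles. -/
theorem eventually_halfTurns_isotopy {F : ℝ × MobiusBand → ℂ} {O : Set MobiusBand}
    (hOo : IsOpen O) (hF : ContinuousOn F (Set.Icc 0 1 ×ˢ O))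
    (hinj : ∀ t ∈ Set.Icc (0 : ℝ) 1, Set.InjOn (fun m => F (t, m)) O)
    {s : ℝ} (hs : s ∈ Set.Icc (0 : ℝ) 1) (hm : strip (s, 0) ∈ O) {f g : MobiusBand → ℂ}
    (hf : ∀ m ∈ O, F (0, m) = f m) (hg : ∀ m ∈ O, F (1, m) = g m) :
    ∃ ε > 0, ∀ ρ, 0 < ρ → ρ < ε →
      ∃ n : ℤ, HasHalfTurns (chordLoop f s ρ) n ∧ HasHalfTurns (chordLoop g s ρ) n := by
  obtain ⟨ε, hε, hmem⟩ := exists_circlePt_mem hOo hm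
  refine ⟨min ε (1 / 4), by positivity, fun ρ h0 h1 => ?_⟩
  have hO : ∀ θ, circlePt s ρ θ ∈ O :=
    hmem s (by simpa using hε) ρ h0 (h1.trans_le (min_le_left _ _))
  obtain ⟨n, -, hall⟩ := exists_halfTurns_chordLoop hF hinj (s := fun _ => s) (ρ := fun _ => ρ)
    continuous_const continuous_const (fun _ _ => hs)
    (fun _ _ => ⟨h0, h1.trans_le (min_le_right _ _)⟩) (fun _ _ => hO)
  refine ⟨n, ?_, ?_⟩
  · convert hall 0 (by simp) using 1
    funext θ
    simp only [chordLoop, hf _ (hO _)]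
  · convert hall 1 (by simp) using 1
    funext θ
    simp only [chordLoop, hg _ (hO _)]

/-! ### The contradiction along the core circle -/

/-- The half-turn number would be constant along the core circle and odd, and equal to its own
negative after one trip around. -/
theorem not_eOrientableManifold_cutBand (c : Set.Ioo (0 : ℝ) 1) :
    ¬ EOrientableManifold (cutBand c) := by
  rintro ⟨U, φ, hφ, htrans⟩
  let K : Set.Icc (0 : ℝ) 1 → MobiusBand := fun s => strip (s, 0)
  let F : MobiusBand → MobiusBand → ℂ := fun x m => unroll c (φ x m)
  have hF : ∀ x, ContinuousOn (F x) (U x) := fun x =>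
    (continuousOn_unroll c).comp (hφ x).2.2.1 (hφ x).2.2.2.2.1
  have hFi : ∀ x, Set.InjOn (F x) (U x) := fun x =>
    (unroll_injective c).comp_injOn (hφ x).2.2.2.1
  have hloc : ∀ s : Set.Icc (0 : ℝ) 1, _ := fun s =>
    exists_local_halfTurns (hφ (K s)).1 (hF (K s)) (hFi (K s)) s.2 (hφ (K s)).2.1
  choose n hn ε hε hturn using hloc
  -- the isotopy of the transition map shows that two charts give the same number
  have hchart : ∀ x y : MobiusBand, ∀ s ∈ Set.Icc (0 : ℝ) 1, strip (s, 0) ∈ U x ∩ U y →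
      ∃ ε > 0, ∀ ρ, 0 < ρ → ρ < ε → ∃ n : ℤ,
        HasHalfTurns (chordLoop (F y) s ρ) n ∧ HasHalfTurns (chordLoop (F x) s ρ) n := by
    intro x y s hs hxy
    obtain ⟨T, hT, hz⟩ := htrans x y
    obtain ⟨W, hW, hzW, -, H, hHc, hH0, hH1, hHt⟩ := hz _ ⟨_, hxy, rfl⟩
    have hO : IsOpen ((U x ∩ φ x ⁻¹' W) ∩ U y) :=
      ((hφ x).2.2.1.isOpen_inter_preimage (hφ x).1 hW).inter (hφ y).1
    refine eventually_halfTurns_isotopy (F := fun q => unroll c (H (q.1, φ x q.2))) hO ?_ ?_ hs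
      ⟨⟨hxy.1, hzW⟩, hxy.2⟩ ?_ ?_
    · refine (continuousOn_unroll c).comp (hHc.comp ?_ ?_) ?_
      · refine continuousOn_fst.prodMk ((hφ x).2.2.1.comp continuousOn_snd ?_)
        exact fun q hq => hq.2.1.1
      · exact fun q hq => ⟨hq.1, hq.2.1.2⟩
      · exact fun q hq => (hHt q.1 hq.1).2.2.1 hq.2.1.2
    · intro t ht
      refine (unroll_injective c).comp_injOn ?_
      exact (hHt t ht).2.1.comp ((hφ x).2.2.2.1.mono fun m hm => hm.1.1) fun m hm => hm.1.2
    · intro m hm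
      simp only [F, hH0 _ hm.1.2, hT m ⟨hm.1.1, hm.2⟩]
    · intro m hm
      simp only [F, hH1 _ hm.1.2, id]
  have hlc : IsLocallyConstant n := by
    rw [IsLocallyConstant.iff_eventually_eq]
    intro s₀
    have h1 : ∀ᶠ s in nhds s₀, K s ∈ U (K s₀) := by
      have hK : Continuous K := continuous_strip.comp (by fun_prop)
      exact hK.continuousAt.eventually_mem ((hφ (K s₀)).1.mem_nhds (hφ (K s₀)).2.1)
    have h2 : ∀ᶠ s : Set.Icc (0 : ℝ) 1 in nhds s₀, |(s : ℝ) - s₀| < ε s₀ :=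
      Metric.ball_mem_nhds s₀ (hε s₀)
    filter_upwards [h1, h2] with s hs1 hs2
    obtain ⟨δ, hδ, hd⟩ := hchart (K s) (K s₀) s s.2 ⟨(hφ _).2.1, hs1⟩
    have hm : 0 < min δ (min (ε s) (ε s₀)) := lt_min hδ (lt_min (hε s) (hε s₀))
    obtain ⟨ρ, h0, hρ⟩ := exists_between hm
    simp only [lt_min_iff] at hρ
    obtain ⟨k, hk0, hk⟩ := hd ρ h0 hρ.1
    have e1 := hturn s s s.2 (by simpa using hε s) ρ h0 hρ.2.1
    have e2 := hturn s₀ s s.2 hs2 ρ h0 hρ.2.2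
    rw [e1.unique hk, e2.unique hk0]
  have h01 : n 0 = n 1 := hlc.apply_eq_of_isPreconnected isPreconnected_univ trivial trivial
  have hK : K 1 = K 0 := by
    have := strip_add_one (x := 0) (by norm_num) (by norm_num) 0
    simpa [K] using this
  have hm : 0 < min (1 / 4) (min (ε 0) (ε 1)) := lt_min (by norm_num) (lt_min (hε 0) (hε 1))
  obtain ⟨ρ, h0, hρ⟩ := exists_between hm
  simp only [lt_min_iff] at hρ
  have e0 := hturn 0 0 (by simp) (by simpa using hε 0) ρ h0 hρ.2.1
  have e1 := hturn 1 1 (by simp) (by simpa using hε 1) ρ h0 hρ.2.2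
  have hrefl : chordLoop (F (K 1)) 1 ρ = fun θ => chordLoop (F (K 0)) 0 ρ (-θ) := by
    funext θ
    simp only [chordLoop, hK, circlePt_one h0 hρ.1]
    rw [← circlePt_add_two_pi 0 ρ (-(θ + Real.pi)),
      show -(θ + Real.pi) + Real.pi + Real.pi = -θ + Real.pi by ring]
  rw [hrefl] at e1
  have h := e1.unique e0.reflect
  have := hn 0
  rw [Int.odd_iff] at this
  omega

/-- The Möbius band is not isotopically orientable. -/
theorem mobiusBand_not_isotopicallyOrientable :
    ¬ IsotopicallyOrientable MobiusBand := by
  rintro ⟨⟨a⟩, he⟩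
  obtain ⟨c, hc⟩ : ∃ c : Set.Ioo (0 : ℝ) 1, (a.1 : ℝ) ≠ c := by
    by_cases h : (a.1 : ℝ) = 1 / 2
    · exact ⟨⟨1 / 3, by norm_num⟩, by rw [h]; norm_num⟩
    · exact ⟨⟨1 / 2, by norm_num⟩, h⟩
  exact not_eOrientableManifold_cutBand c
    (he _ (isOpen_cutBand c) ((mk_mem_cutBand c a).2 hc))
end
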